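/- Let −3 < γ ≤ 1 and k ≥ 4. Then there exists a constant C_k > 0 such that for all measurable h, g : ℝ³ → ℝ for which all integrals below converge absolutely, |∫_{ℝ³} Q(h, μ)(v) g(v) ⟨v⟩^{2k} dv| ≤ ‖b(cos θ) sin^{k−(3+γ)/2}(θ/2)‖_{L¹_θ} · ‖h‖_{L²_{k+γ/2,*}} ‖g‖_{L²_{k+γ/2,*}} + C_k ‖h‖_{L²_{k+γ/2−1/2}} ‖g‖_{L²_{k+γ/2−1/2}}. -/

import Mathlib

/-!
Write `a = v'` and `c = v*'` for the post-collisional velocities and `s = sin (θ/2)`. Taking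
absolute values separates the gain integral, with integrand
`|v - v*| ^ γ b (cos θ) |h c| μ a |g v| ⟨v⟩ ^ 2k`, from the loss integral.

Since `|v - a| = s |v - v*|` and `|a - c| = |v - v*|`, one has `⟨v⟩ ≤ s ⟨c⟩ + (1 + 2 |a|)`
(`jap_split`). Hence `⟨v⟩ ^ 2k ≤ (s ⟨c⟩) ^ k ⟨v⟩ ^ k` up to terms that are of lower order in `⟨c⟩`
and `⟨v⟩` and polynomial in `|a|` (`weight_split`), and the Gaussian `μ a` absorbs the polynomials,
leaving a weight `⟨a⟩⁻⁷` (`gauss_bound`).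

The principal term is estimated by Cauchy-Schwarz, writing `s ^ 2k = s ^ α * s ^ (α + 3 + γ)` with
`α = k - (3 + γ) / 2` (`term_principal`). The factor with `h c` and `s ^ α` is computed by the
pre-post-collisional change of variables (`prepost_change`); the factor with `g v` and
`s ^ (α + 3 + γ)` by the change of variables `v* ↦ v'` at fixed `v`, whose cost is
`s ^ (- 3 - γ)` (`singular_change`). Both yield the same angular integral times a squared star norm,
hence the sharp constant.

The remaining gain terms and the loss term are treated in the same way with `⟨a⟩⁻⁷` in place of
`μ a`, using only that the angular integrals are bounded and that
`∫ |v - u| ^ γ ⟨u⟩⁻⁷ du` is at most a multiple of `⟨v⟩ ^ γ` (`kernel_bound`).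

The singular change of variables rests on `lintegral_bisec`: in polar coordinates around `v` the
point `v'` lies in the direction `σ - ω`, and for a pair `(ω, σ)` distributed according to a
function of `⟪ω, σ⟫` this direction is uniform on the sphere, because its law is rotation invariant
(`unique_invariant`). This replaces the computation of a Jacobian.
-/

open MeasureTheory Real
open scoped ENNReal RealInnerProductSpace Classical

noncomputable section

/-- velocity space ℝ³ -/
abbrev E3 : Type := EuclideanSpace ℝ (Fin 3)

/-- the unit sphere 𝕊² ⊆ ℝ³ -/
abbrev S2 : Type := Metric.sphere (0 : E3) 1

/-- surface measure on the unit sphere -/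
noncomputable instance : MeasureSpace S2 := ⟨(volume : Measure E3).toSphere⟩

/-- Japanese bracket ⟨v⟩ = √(1+|v|²). -/
def jap (v : E3) : ℝ := Real.sqrt (1 + ‖v‖ ^ 2)

/-- Post-collision velocity v' = (v+v*)/2 + (|v-v*|/2)σ. -/
def vP (v w : E3) (σ : S2) : E3 := (2⁻¹ : ℝ) • (v + w) + (‖v - w‖ / 2) • (σ : E3)

/-- Post-collision velocity v*' = (v+v*)/2 - (|v-v*|/2)σ. -/
def vsP (v w : E3) (σ : S2) : E3 := (2⁻¹ : ℝ) • (v + w) - (‖v - w‖ / 2) • (σ : E3)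

/-- cos θ = ((v-v*)/|v-v*|)·σ. -/
def cosTheta (v w : E3) (σ : S2) : ℝ := ⟪v - w, (σ : E3)⟫ / ‖v - w‖

/-- sin(θ/2) = √((1-cos θ)/2). -/
def sinHalf (v w : E3) (σ : S2) : ℝ := Real.sqrt ((1 - cosTheta v w σ) / 2)

/-- cos(θ/2) = √((1+cos θ)/2). -/
def cosHalf (v w : E3) (σ : S2) : ℝ := Real.sqrt ((1 + cosTheta v w σ) / 2)

/-- a fixed reference unit direction, used to express rotation-invariant angular integrals -/
def e1 : E3 := EuclideanSpace.single 0 1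

/-- cos θ for the deviation angle of σ relative to the fixed direction `e1` -/
def cos1 (σ : S2) : ℝ := ⟪e1, (σ : E3)⟫

def sinHalf1 (σ : S2) : ℝ := Real.sqrt ((1 - cos1 σ) / 2)

def cosHalf1 (σ : S2) : ℝ := Real.sqrt ((1 + cos1 σ) / 2)

/-- the standard Maxwellian μ(v) = (2π)^{-3/2} e^{-|v|²/2} -/
def maxw (v : E3) : ℝ := (2 * π) ^ (-(3 : ℝ) / 2) * Real.exp (-‖v‖ ^ 2 / 2)

/-- Grad's angular cutoff assumption (A2): `bf` is measurable, nonnegative,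
`K ≤ bf ≤ K⁻¹` on `[0,1]` for some `K > 0`, and `bf` vanishes on negatives. -/
def gradCutoff (bf : ℝ → ℝ) : Prop :=
  Measurable bf ∧ (∀ t, 0 ≤ bf t) ∧
    (∃ K : ℝ, 0 < K ∧ ∀ t ∈ Set.Icc (0 : ℝ) 1, K ≤ bf t ∧ bf t ≤ K⁻¹) ∧
    ∀ t : ℝ, t < 0 → bf t = 0

/-- gain operator Q⁺ -/
def Qgain (γ : ℝ) (bf : ℝ → ℝ) (f g : E3 → ℝ) (v : E3) : ℝ :=
  ∫ w : E3, ∫ σ : S2, ‖v - w‖ ^ γ * bf (cosTheta v w σ) * (f (vsP v w σ) * g (vP v w σ))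

/-- loss operator Q⁻ -/
def Qloss (γ : ℝ) (bf : ℝ → ℝ) (f g : E3 → ℝ) (v : E3) : ℝ :=
  ∫ w : E3, ∫ σ : S2, ‖v - w‖ ^ γ * bf (cosTheta v w σ) * (f w * g v)

/-- the Boltzmann collision operator Q = Q⁺ - Q⁻ -/
def Qcol (γ : ℝ) (bf : ℝ → ℝ) (f g : E3 → ℝ) (v : E3) : ℝ :=
  ∫ w : E3, ∫ σ : S2, ‖v - w‖ ^ γ * bf (cosTheta v w σ) *
    (f (vsP v w σ) * g (vP v w σ) - f w * g v)

/-- collision frequency ν(v) -/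
def nuF (γ : ℝ) (bf : ℝ → ℝ) (v : E3) : ℝ :=
  ∫ w : E3, ∫ σ : S2, ‖v - w‖ ^ γ * bf (cosTheta v w σ) * maxw w

/-- squared weighted norm ‖f‖²_{L²_q} -/
def wSqR (q : ℝ) (f : E3 → ℝ) : ℝ := ∫ v : E3, f v ^ 2 * jap v ^ (2 * q)

/-- weighted norm ‖f‖_{L²_q} -/
def wNorm (q : ℝ) (f : E3 → ℝ) : ℝ := Real.sqrt (wSqR q f)

/-- squared star norm ‖f‖²_{L²_{k+γ/2,*}} = ∫∫ μ(v*)|v-v*|^γ f(v)² ⟨v⟩^{2k} -/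
def starSq (γ k : ℝ) (f : E3 → ℝ) : ℝ :=
  ∫ v : E3, ∫ w : E3, maxw w * ‖v - w‖ ^ γ * f v ^ 2 * jap v ^ (2 * k)

/-- star norm ‖f‖_{L²_{k+γ/2,*}} -/
def starNorm (γ k : ℝ) (f : E3 → ℝ) : ℝ := Real.sqrt (starSq γ k f)

/-- squared exponentially weighted norm ‖f‖²_{L²_{q,a,b}} -/
def expSq (q a b : ℝ) (f : E3 → ℝ) : ℝ :=
  ∫ v : E3, f v ^ 2 * jap v ^ (2 * q) * Real.exp (2 * a * jap v ^ b)

/-- exponentially weighted norm ‖f‖_{L²_{q,a,b}} -/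
def expNorm (q a b : ℝ) (f : E3 → ℝ) : ℝ := Real.sqrt (expSq q a b f)

/-- rotation-invariant angular integral ∫_{S²} bf(cos θ) sin^α(θ/2) dσ -/
def angSin (bf : ℝ → ℝ) (α : ℝ) : ℝ := ∫ σ : S2, bf (cos1 σ) * sinHalf1 σ ^ α

/-! ### Polar coordinates and rotation invariance on the sphere -/

instance instFiniteS2 : IsFiniteMeasure (volume : Measure S2) :=
  inferInstanceAs (IsFiniteMeasure (volume : Measure E3).toSphere)

/-- Integration in polar coordinates. -/
theorem lintegral_polar (f : E3 → ℝ≥0∞) (hf : Measurable f) :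
    ∫⁻ z, f z = ∫⁻ ω : S2, ∫⁻ r in Set.Ioi (0 : ℝ), ENNReal.ofReal (r ^ 2) * f (r • (ω : E3)) := by
  have h1 : ∫⁻ z, f z = ∫⁻ z : ({0}ᶜ : Set E3), f z ∂((volume : Measure E3).comap Subtype.val) := by
    rw [lintegral_subtype_comap (measurableSet_singleton _).compl, restrict_compl_singleton]
  have h2 := (volume : Measure E3).measurePreserving_homeomorphUnitSphereProd.symm
    (Homeomorph.toMeasurableEquiv (homeomorphUnitSphereProd E3))
  have h3 := h2.lintegral_comp_emb (MeasurableEquiv.measurableEmbedding _)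
    (fun z : ({0}ᶜ : Set E3) => f z)
  rw [h1, ← h3, lintegral_prod]
  · refine lintegral_congr fun ω => ?_
    rw [Measure.volumeIoiPow, lintegral_withDensity_eq_lintegral_mul]
    · have h4 := lintegral_subtype_comap (μ := (volume : Measure ℝ)) (measurableSet_Ioi (a := (0:ℝ)))
        (fun r => ENNReal.ofReal (r ^ 2) * f (r • (ω : E3)))
      rw [← h4]
      refine lintegral_congr fun r => ?_
      simp
    · fun_prop
    · apply Measurable.comp hf
      apply measurable_subtype_coe.comp
      exact (MeasurableEquiv.measurable _).comp (measurable_const.prodMk measurable_id)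
  · apply Measurable.aemeasurable
    exact (hf.comp measurable_subtype_coe).comp (MeasurableEquiv.measurable _)

/-- Action of a linear isometry on the unit sphere. -/
def rotS (R : E3 ≃ₗᵢ[ℝ] E3) (σ : S2) : S2 := ⟨R σ, by simp⟩

theorem measurable_rotS (R : E3 ≃ₗᵢ[ℝ] E3) : Measurable (rotS R) := by
  unfold rotS
  exact (R.continuous.measurable.comp measurable_subtype_coe).subtype_mk

open scoped Pointwise in
theorem lintegral_rotS (R : E3 ≃ₗᵢ[ℝ] E3) (f : S2 → ℝ≥0∞) (hf : Measurable f) :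
    ∫⁻ σ, f (rotS R σ) = ∫⁻ σ, f σ := by
  have hmp : MeasurePreserving (rotS R) (volume : Measure S2) volume := by
    refine ⟨measurable_rotS R, Measure.ext fun s hs => ?_⟩
    rw [Measure.map_apply (measurable_rotS R) hs]
    change (volume : Measure E3).toSphere _ = (volume : Measure E3).toSphere _
    rw [Measure.toSphere_apply' _ hs, Measure.toSphere_apply' _ (measurable_rotS R hs)]
    have : Set.Ioo (0 : ℝ) 1 • (Subtype.val '' (rotS R ⁻¹' s) : Set E3) =
        R ⁻¹' (Set.Ioo (0 : ℝ) 1 • (Subtype.val '' s : Set E3)) := by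
      ext x
      simp only [Set.mem_smul, Set.mem_image, Set.mem_preimage]
      constructor
      · rintro ⟨r, hr, _, ⟨σ, hσ, rfl⟩, rfl⟩
        exact ⟨r, hr, _, ⟨rotS R σ, hσ, rfl⟩, by simp [rotS]⟩
      · rintro ⟨r, hr, _, ⟨σ, hσ, rfl⟩, h⟩
        refine ⟨r, hr, _, ⟨rotS R.symm σ, ?_, rfl⟩, ?_⟩
        · have : rotS R (rotS R.symm σ) = σ := Subtype.ext (by simp [rotS])
          simpa [this] using hσ
        · apply R.injective
          simp [rotS, h]
    rw [this, R.measurePreserving.measure_preimage_emb R.toHomeomorph.measurableEmbedding]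
  exact hmp.lintegral_comp hf

theorem exists_rot {x y : E3} (h : ‖x‖ = ‖y‖) : ∃ R : E3 ≃ₗᵢ[ℝ] E3, R x = y :=
  ⟨_, Submodule.reflection_sub h⟩

/-- Zonal integrals on the sphere do not depend on the pole. -/
theorem lintegral_zonal (Φ : ℝ → ℝ≥0∞) (hΦ : Measurable Φ) (ω : E3) (hω : ‖ω‖ = 1) :
    ∫⁻ σ : S2, Φ ⟪ω, (σ : E3)⟫ = ∫⁻ σ : S2, Φ (cos1 σ) := by
  obtain ⟨R, hR⟩ := exists_rot (x := e1) (y := ω) (by simp [e1, hω])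
  rw [← lintegral_rotS R]
  · refine lintegral_congr fun σ => ?_
    rw [← hR]
    simp [rotS, cos1]
  · fun_prop

/-- A finite measure on `E3` carried by the unit sphere and invariant under linear isometries is,
up to normalisation of the total mass, the surface measure. Both have the same characteristic
function, because averaging `exp (i⟪x, ξ⟫)` over `x` and over the direction of `ξ` commute. -/
theorem unique_invariant (ν : Measure E3) [IsFiniteMeasure ν] (hν : ∀ᵐ x ∂ν, ‖x‖ = 1)
    (hinv : ∀ R : E3 ≃ₗᵢ[ℝ] E3, ν.map R = ν) :
    (volume : Measure S2) Set.univ • ν =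
      ν Set.univ • (volume : Measure S2).map (Subtype.val : S2 → E3) := by
  set τ : Measure E3 := (volume : Measure S2).map (Subtype.val : S2 → E3) with hτ
  have hτu : τ Set.univ = (volume : Measure S2) Set.univ := by
    rw [hτ, Measure.map_apply measurable_subtype_coe MeasurableSet.univ, Set.preimage_univ]
  have hτfin : IsFiniteMeasure τ := ⟨by rw [hτu]; exact measure_lt_top _ _⟩
  have hτn : ∀ᵐ x ∂τ, ‖x‖ = 1 := by
    rw [hτ, ae_map_iff measurable_subtype_coe.aemeasurable
      (measurableSet_eq_fun measurable_norm measurable_const)]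
    exact Filter.Eventually.of_forall fun σ => by simp
  have hτinv : ∀ R : E3 ≃ₗᵢ[ℝ] E3, τ.map R = τ := by
    intro R
    ext s hs
    have hR : Measurable R := R.continuous.measurable
    rw [Measure.map_apply hR hs, hτ, Measure.map_apply measurable_subtype_coe hs,
      Measure.map_apply measurable_subtype_coe (hR hs)]
    have h := lintegral_rotS R (Set.indicator (Subtype.val ⁻¹' s) 1)
      (measurable_one.indicator (measurable_subtype_coe hs))
    rw [lintegral_indicator_one (measurable_subtype_coe hs)] at h
    rw [← h, ← lintegral_indicator_one (measurable_subtype_coe (hR hs))]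
    rfl
  have key : ∀ ρ : Measure E3, IsFiniteMeasure ρ → (∀ R : E3 ≃ₗᵢ[ℝ] E3, ρ.map R = ρ) →
      ∀ ξ η : E3, ‖ξ‖ = ‖η‖ → charFun ρ ξ = charFun ρ η := by
    intro ρ _ hρ ξ η h
    obtain ⟨R, hR⟩ := exists_rot h
    rw [← hR, charFun_apply, charFun_apply]
    nth_rw 2 [← hρ R]
    rw [integral_map R.continuous.measurable.aemeasurable (by fun_prop)]
    simp
  have hνu : IsFiniteMeasure ((volume : Measure S2) Set.univ • ν) :=
    ⟨by simpa using ENNReal.mul_lt_top (measure_lt_top _ _) (measure_lt_top _ _)⟩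
  have hτu' : IsFiniteMeasure (ν Set.univ • τ) :=
    ⟨by simpa using ENNReal.mul_lt_top (measure_lt_top _ _) (measure_lt_top _ _)⟩
  refine Measure.ext_of_charFun (funext fun ξ => ?_)
  rw [charFun_apply, charFun_apply, integral_smul_measure, integral_smul_measure, ← charFun_apply,
    ← charFun_apply, ← hτu]
  have e1 : ∫ η, ∫ x, Complex.exp (⟪x, ‖ξ‖ • η⟫ * Complex.I) ∂ν ∂τ = (τ Set.univ).toReal • charFun ν ξ := by
    rw [integral_congr_ae (g := fun _ => charFun ν ξ)]
    · simp [Measure.real]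
    · filter_upwards [hτn] with η hη
      rw [← charFun_apply]
      exact key ν inferInstance hinv _ _ (by simp [norm_smul, hη])
  have e2 : ∫ x, ∫ η, Complex.exp (⟪x, ‖ξ‖ • η⟫ * Complex.I) ∂τ ∂ν = (ν Set.univ).toReal • charFun τ ξ := by
    rw [integral_congr_ae (g := fun _ => charFun τ ξ)]
    · simp [Measure.real]
    · filter_upwards [hν] with x hx
      have : ∀ η : E3, ⟪x, ‖ξ‖ • η⟫ = ⟪η, ‖ξ‖ • x⟫ := by
        intro η
        rw [inner_smul_right, inner_smul_right, real_inner_comm]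
      simp_rw [this]
      rw [← charFun_apply]
      exact key τ inferInstance hτinv _ _ (by simp [norm_smul, hx])
  rw [← e1, ← e2]
  apply integral_integral_swap
  apply Integrable.of_bound (C := 1) (by fun_prop)
  refine Filter.Eventually.of_forall fun p => ?_
  simp only [Function.uncurry]
  rw [Complex.norm_exp_ofReal_mul_I]

/-! ### Changes of variables in collision integrals -/

theorem norm_S2 (σ : S2) : ‖(σ : E3)‖ = 1 := by simp

theorem inner_S2_mem (ω σ : S2) : ⟪(ω : E3), (σ : E3)⟫ ∈ Set.Icc (-1 : ℝ) 1 := by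
  have h := abs_real_inner_le_norm (ω : E3) (σ : E3)
  rw [norm_S2, norm_S2, one_mul] at h
  exact abs_le.mp h

theorem norm_sub_S2 (ω σ : S2) :
    ‖(σ : E3) - ω‖ = 2 * √((1 - ⟪(ω : E3), (σ : E3)⟫) / 2) := by
  have h : ‖(σ : E3) - ω‖ ^ 2 = 2 - 2 * ⟪(ω : E3), (σ : E3)⟫ := by
    rw [norm_sub_sq_real, norm_S2, norm_S2, real_inner_comm]; ring
  have h2 : √((1 - ⟪(ω : E3), (σ : E3)⟫) / 2) = ‖(σ : E3) - ω‖ / 2 := by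
    rw [show (1 - ⟪(ω : E3), (σ : E3)⟫) / 2 = (‖(σ : E3) - ω‖ / 2) ^ 2 by rw [div_pow, h]; ring]
    exact Real.sqrt_sq (by positivity)
  rw [h2]; ring

/-- Bisector direction of two distinct unit vectors. -/
def bisec (p : S2 × S2) : E3 := ‖(p.2 : E3) - p.1‖⁻¹ • ((p.2 : E3) - p.1)

theorem measurable_bisec : Measurable bisec := by unfold bisec; fun_prop

theorem lintegral_zonal_prod (Φ : ℝ → ℝ≥0∞) (hΦ : Measurable Φ) :
    ∫⁻ p : S2 × S2, Φ ⟪(p.1 : E3), (p.2 : E3)⟫ =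
      (volume : Measure S2) Set.univ * ∫⁻ σ : S2, Φ (cos1 σ) := by
  rw [Measure.volume_eq_prod, lintegral_prod _ (by fun_prop)]
  simp only [lintegral_zonal Φ hΦ _ (norm_S2 _)]
  simp [mul_comm]

theorem lintegral_rotS_prod (R : E3 ≃ₗᵢ[ℝ] E3) (f : S2 × S2 → ℝ≥0∞) (hf : Measurable f) :
    ∫⁻ p : S2 × S2, f (rotS R p.1, rotS R p.2) = ∫⁻ p, f p := by
  have hR := measurable_rotS R
  rw [Measure.volume_eq_prod, lintegral_prod _ (by fun_prop), lintegral_prod _ (by fun_prop)]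
  have : ∀ ω, ∫⁻ σ, f (rotS R ω, rotS R σ) = ∫⁻ σ, f (rotS R ω, σ) := fun ω =>
    lintegral_rotS R (fun σ => f (rotS R ω, σ)) (by fun_prop)
  simp only [this]
  exact lintegral_rotS R (fun ω => ∫⁻ σ, f (ω, σ)) hf.lintegral_prod_right'

/-- Under a weight depending only on the angle between `ω` and `σ`, the direction of `σ - ω`
is uniformly distributed on the sphere. -/
theorem lintegral_bisec (Φ : ℝ → ℝ≥0∞) (hΦ : Measurable Φ) (hΦ1 : Φ 1 = 0)
    (hfin : ∫⁻ σ : S2, Φ (cos1 σ) ≠ ∞) (G : E3 → ℝ≥0∞) (hG : Measurable G) :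
    ∫⁻ p : S2 × S2, Φ ⟪(p.1 : E3), (p.2 : E3)⟫ * G (bisec p) =
      (∫⁻ σ : S2, Φ (cos1 σ)) * ∫⁻ σ : S2, G σ := by
  set D : S2 × S2 → ℝ≥0∞ := fun p => Φ ⟪(p.1 : E3), (p.2 : E3)⟫ with hD
  have hDm : Measurable D := by fun_prop
  set ν : Measure E3 := ((volume : Measure (S2 × S2)).withDensity D).map bisec with hν
  have hνint : ∀ H : E3 → ℝ≥0∞, Measurable H → ∫⁻ x, H x ∂ν = ∫⁻ p, D p * H (bisec p) := by
    intro H hH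
    have hHb : Measurable fun p => H (bisec p) := hH.comp measurable_bisec
    rw [hν, lintegral_map hH measurable_bisec,
      lintegral_withDensity_eq_lintegral_mul _ hDm hHb]
    rfl
  have hνu : ν Set.univ = (volume : Measure S2) Set.univ * ∫⁻ σ : S2, Φ (cos1 σ) := by
    rw [← lintegral_one, hνint _ measurable_const]
    simp only [mul_one]
    exact lintegral_zonal_prod Φ hΦ
  have hνfin : IsFiniteMeasure ν :=
    ⟨by rw [hνu]; exact ENNReal.mul_lt_top (measure_lt_top _ _) hfin.lt_top⟩
  have hνn : ∀ᵐ x ∂ν, ‖x‖ = 1 := by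
    rw [hν, ae_map_iff measurable_bisec.aemeasurable
      (measurableSet_eq_fun measurable_norm measurable_const),
      ae_withDensity_iff hDm]
    refine Filter.Eventually.of_forall fun p hp => ?_
    have : (p.2 : E3) - p.1 ≠ 0 := by
      intro h
      apply hp
      rw [sub_eq_zero] at h
      simp [hD, h, hΦ1]
    simp [bisec, norm_smul, this]
  have hνinv : ∀ R : E3 ≃ₗᵢ[ℝ] E3, ν.map R = ν := by
    intro R
    have hRm : Measurable R := R.continuous.measurable
    refine Measure.ext_of_lintegral _ fun H hH => ?_
    rw [lintegral_map hH hRm, hνint _ hH,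
      hνint (fun x => H (R x)) (hH.comp hRm)]
    rw [← lintegral_rotS_prod R (fun p => D p * H (bisec p))
      (hDm.mul (hH.comp measurable_bisec))]
    refine lintegral_congr fun p => ?_
    simp [hD, bisec, rotS, ← map_sub]
  have h := congrArg (fun m : Measure E3 => ∫⁻ x, G x ∂m) (unique_invariant ν hνn hνinv)
  simp only [lintegral_smul_measure, smul_eq_mul] at h
  rw [lintegral_map hG measurable_subtype_coe, hνint G hG, hνu, mul_assoc] at h
  have h0 : (volume : Measure S2) Set.univ ≠ 0 := by
    rw [Measure.measure_univ_ne_zero]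
    exact (volume : Measure E3).toSphere_ne_zero
  exact (ENNReal.mul_right_inj h0 (measure_ne_top _ _)).mp h

theorem measurable_cosTheta : Measurable fun p : E3 × E3 × S2 => cosTheta p.1 p.2.1 p.2.2 := by
  unfold cosTheta; fun_prop

theorem measurable_vP : Measurable fun p : E3 × E3 × S2 => vP p.1 p.2.1 p.2.2 := by
  unfold vP; fun_prop

theorem measurable_vsP : Measurable fun p : E3 × E3 × S2 => vsP p.1 p.2.1 p.2.2 := by
  unfold vsP; fun_prop

theorem cosTheta_polar (ω σ : S2) {r : ℝ} (hr : 0 < r) (v w : E3) (h : v - w = r • (ω : E3)) :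
    cosTheta v w σ = ⟪(ω : E3), (σ : E3)⟫ := by
  rw [cosTheta, h, norm_smul, norm_S2, inner_smul_left]
  simp [abs_of_pos hr, hr.ne']

/-- Scaling of the radial integral along a ray. -/
theorem radial_scale (γ : ℝ) (F : E3 → ℝ≥0∞) (hF : Measurable F) (v n : E3) {s : ℝ} (hs : 0 < s) :
    ENNReal.ofReal (s ^ (3 + γ)) *
      ∫⁻ r in Set.Ioi (0 : ℝ), ENNReal.ofReal (r ^ (2 + γ)) * F (v + r • (s • n)) =
      ∫⁻ r in Set.Ioi (0 : ℝ), ENNReal.ofReal (r ^ (2 + γ)) * F (v + r • n) := by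
  have hsub := lintegral_image_eq_lintegral_abs_deriv_mul (s := Set.Ioi (0 : ℝ))
    (f := fun r => r * s) (f' := fun _ => s) measurableSet_Ioi
    (fun x _ => by simpa using ((hasDerivAt_id x).mul_const s).hasDerivWithinAt)
    (fun x _ y _ h => mul_right_cancel₀ hs.ne' h)
    (fun r => ENNReal.ofReal (r ^ (2 + γ)) * F (v + r • n))
  have him : (fun r => r * s) '' Set.Ioi (0 : ℝ) = Set.Ioi 0 := by
    ext x
    simp only [Set.mem_image, Set.mem_Ioi]
    exact ⟨fun ⟨r, hr, h⟩ => h ▸ mul_pos hr hs, fun h => ⟨x / s, div_pos h hs, by field_simp⟩⟩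
  rw [him] at hsub
  rw [hsub, ← lintegral_const_mul _ (by fun_prop)]
  refine setLIntegral_congr_fun measurableSet_Ioi fun r hr => ?_
  have hr : 0 < r := hr
  rw [abs_of_pos hs, ← mul_assoc, ← mul_assoc, ← ENNReal.ofReal_mul (by positivity),
    ← ENNReal.ofReal_mul hs.le, smul_smul]
  congr 2
  rw [Real.mul_rpow hr.le hs.le, show (3 + γ) = 1 + (2 + γ) by ring, Real.rpow_add hs, Real.rpow_one]
  ring

/-- The singular change of variables `v* ↦ v'` at fixed `v`: it costs a factor
`sin(θ/2) ^ (-3 - γ)` because `|v' - v| = sin(θ/2) |v - v*|`. -/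
theorem singular_change (γ : ℝ) (Φ Ψ : ℝ → ℝ≥0∞) (hΦ : Measurable Φ)
    (hΨ : Measurable Ψ)
    (hΦΨ : ∀ t ∈ Set.Icc (-1 : ℝ) 1, Φ t = Ψ t * ENNReal.ofReal (√((1 - t) / 2) ^ (3 + γ)))
    (hΨ1 : Ψ 1 = 0) (hfin : ∫⁻ σ : S2, Ψ (cos1 σ) ≠ ∞)
    (F : E3 → ℝ≥0∞) (hF : Measurable F) (v : E3) :
    ∫⁻ w, ∫⁻ σ : S2, ENNReal.ofReal (‖v - w‖ ^ γ) * Φ (cosTheta v w σ) * F (vP v w σ) =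
      (∫⁻ σ : S2, Ψ (cos1 σ)) * ∫⁻ u, ENNReal.ofReal (‖v - u‖ ^ γ) * F u := by
  set G : E3 → ℝ≥0∞ := fun n =>
    ∫⁻ r in Set.Ioi (0 : ℝ), ENNReal.ofReal (r ^ (2 + γ)) * F (v + r • n) with hG
  have hGm : Measurable G := by
    apply Measurable.lintegral_prod_right'
      (f := fun p : E3 × ℝ => ENNReal.ofReal (p.2 ^ (2 + γ)) * F (v + p.2 • p.1))
    fun_prop
  have hpow : ∀ r : ℝ, 0 < r → ENNReal.ofReal (r ^ 2) * ENNReal.ofReal (r ^ γ) =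
      ENNReal.ofReal (r ^ (2 + γ)) := fun r hr => by
    rw [← ENNReal.ofReal_mul (by positivity), Real.rpow_add hr, Real.rpow_two]
  have hR : ∫⁻ u, ENNReal.ofReal (‖v - u‖ ^ γ) * F u = ∫⁻ ω : S2, G ω := by
    rw [← lintegral_add_left_eq_self _ v, lintegral_polar _ (by fun_prop)]
    refine lintegral_congr fun ω => setLIntegral_congr_fun measurableSet_Ioi fun r hr => ?_
    have hr : 0 < r := hr
    simp only [sub_add_cancel_left, norm_neg, norm_smul, norm_S2, mul_one, Real.norm_eq_abs,
      abs_of_pos hr]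
    rw [← mul_assoc, hpow r hr]
  have hmc := measurable_cosTheta
  have hmv := measurable_vP
  have hL : ∫⁻ w, ∫⁻ σ : S2, ENNReal.ofReal (‖v - w‖ ^ γ) * Φ (cosTheta v w σ) * F (vP v w σ) =
      ∫⁻ p : S2 × S2, Φ ⟪(p.1 : E3), (p.2 : E3)⟫ * G ((2⁻¹ : ℝ) • ((p.2 : E3) - p.1)) := by
    rw [Measure.volume_eq_prod, lintegral_prod _ (by fun_prop),
      ← lintegral_sub_left_eq_self _ v, lintegral_polar]
    · refine lintegral_congr fun ω => ?_
      have e : ∀ r ∈ Set.Ioi (0 : ℝ), ENNReal.ofReal (r ^ 2) * ∫⁻ σ : S2,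
          ENNReal.ofReal (‖v - (v - r • (ω : E3))‖ ^ γ) * Φ (cosTheta v (v - r • (ω : E3)) σ) *
            F (vP v (v - r • (ω : E3)) σ) =
          ∫⁻ σ : S2, Φ ⟪(ω : E3), (σ : E3)⟫ * (ENNReal.ofReal (r ^ (2 + γ)) *
            F (v + r • ((2⁻¹ : ℝ) • ((σ : E3) - ω)))) := by
        intro r hr
        have hr : 0 < r := hr
        rw [← lintegral_const_mul' _ _ ENNReal.ofReal_ne_top]
        refine lintegral_congr fun σ => ?_
        have h1 : v - (v - r • (ω : E3)) = r • (ω : E3) := by abel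
        have h2 : ‖v - (v - r • (ω : E3))‖ = r := by
          rw [h1, norm_smul, norm_S2, mul_one, Real.norm_eq_abs, abs_of_pos hr]
        have h3 : vP v (v - r • (ω : E3)) σ = v + r • ((2⁻¹ : ℝ) • ((σ : E3) - ω)) := by
          rw [vP, h2]; module
        rw [cosTheta_polar ω σ hr _ _ h1, h2, h3, ← hpow r hr]
        ring
      rw [setLIntegral_congr_fun measurableSet_Ioi e, lintegral_lintegral_swap]
      · refine lintegral_congr fun σ => ?_
        rw [lintegral_const_mul _ (by fun_prop)]
      · apply Measurable.aemeasurable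
        simp only [Function.uncurry_def]
        fun_prop
    · apply Measurable.lintegral_prod_right' (f := fun p : E3 × S2 =>
        ENNReal.ofReal (‖v - (v - p.1)‖ ^ γ) * Φ (cosTheta v (v - p.1) p.2) * F (vP v (v - p.1) p.2))
      unfold cosTheta vP
      fun_prop
  rw [hL, hR, ← lintegral_bisec Ψ hΨ hΨ1 hfin G hGm]
  refine lintegral_congr fun p => ?_
  obtain ⟨ω, σ⟩ := p
  simp only
  rw [hΦΨ _ (inner_S2_mem ω σ), mul_assoc]
  have hd := norm_sub_S2 ω σ
  rcases eq_or_ne (√((1 - ⟪(ω : E3), (σ : E3)⟫) / 2)) 0 with h0 | h0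
  · have : (ω : E3) = σ := by
      rw [h0, mul_zero, norm_eq_zero, sub_eq_zero] at hd; exact hd.symm
    simp [this, hΨ1]
  · congr 1
    have hs : 0 < √((1 - ⟪(ω : E3), (σ : E3)⟫) / 2) := lt_of_le_of_ne (Real.sqrt_nonneg _) h0.symm
    have : (2⁻¹ : ℝ) • ((σ : E3) - ω) =
        √((1 - ⟪(ω : E3), (σ : E3)⟫) / 2) • bisec (ω, σ) := by
      simp only [bisec]
      rw [hd, smul_smul]
      congr 1
      field_simp
    rw [this]
    exact radial_scale γ F hF v _ hs

/-- The involutive change of variables exchanging pre- and post-collisional velocities, together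
with integration over the direction of the relative velocity. In centre-of-mass variables it
exchanges the direction of `v - v*` with `σ`. -/
theorem prepost_change (γ : ℝ) (Φ : ℝ → ℝ≥0∞) (hΦ : Measurable Φ)
    (F : E3 → E3 → ℝ≥0∞) (hF : Measurable (Function.uncurry F)) :
    ∫⁻ w, ∫⁻ v, ∫⁻ σ : S2, ENNReal.ofReal (‖v - w‖ ^ γ) * Φ (cosTheta v w σ) *
        F (vP v w σ) (vsP v w σ) =
      (∫⁻ σ : S2, Φ (cos1 σ)) * ∫⁻ w, ∫⁻ v, ENNReal.ofReal (‖v - w‖ ^ γ) * F v w := by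
  set K : E3 → ℝ≥0∞ := fun z => ∫⁻ w, F (w + (2⁻¹ : ℝ) • z) (w - (2⁻¹ : ℝ) • z) with hK
  have hF' : ∀ {α : Type} [MeasurableSpace α] (f g : α → E3), Measurable f → Measurable g →
      Measurable fun a => F (f a) (g a) := fun f g hf hg => hF.comp (hf.prodMk hg)
  have hKm : Measurable K := by
    apply Measurable.lintegral_prod_right'
      (f := fun p : E3 × E3 => F (p.2 + (2⁻¹ : ℝ) • p.1) (p.2 - (2⁻¹ : ℝ) • p.1))
    exact hF' _ _ (by fun_prop) (by fun_prop)
  have hpow : ∀ r : ℝ, 0 < r → ENNReal.ofReal (r ^ 2) * ENNReal.ofReal (r ^ γ) =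
      ENNReal.ofReal (r ^ (2 + γ)) := fun r hr => by
    rw [← ENNReal.ofReal_mul (by positivity), Real.rpow_add hr, Real.rpow_two]
  have hR : ∫⁻ w, ∫⁻ v, ENNReal.ofReal (‖v - w‖ ^ γ) * F v w =
      ∫⁻ ω : S2, ∫⁻ r in Set.Ioi (0 : ℝ), ENNReal.ofReal (r ^ (2 + γ)) * K (r • (ω : E3)) := by
    have h1 : ∀ w, ∫⁻ v, ENNReal.ofReal (‖v - w‖ ^ γ) * F v w =
        ∫⁻ z, ENNReal.ofReal (‖z‖ ^ γ) * F (w + z) w := by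
      intro w
      rw [← lintegral_add_left_eq_self _ w]
      simp
    simp only [h1]
    rw [lintegral_lintegral_swap]
    · have h2 : ∀ z, ∫⁻ w, ENNReal.ofReal (‖z‖ ^ γ) * F (w + z) w =
          ENNReal.ofReal (‖z‖ ^ γ) * K z := by
        intro z
        rw [lintegral_const_mul' _ _ ENNReal.ofReal_ne_top,
          ← lintegral_sub_right_eq_self _ ((2⁻¹ : ℝ) • z)]
        congr 1
        refine lintegral_congr fun w => ?_
        congr 1
        module
      simp only [h2]
      rw [lintegral_polar _ (by fun_prop)]
      refine lintegral_congr fun ω => setLIntegral_congr_fun measurableSet_Ioi fun r hr => ?_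
      have hr : 0 < r := hr
      simp only [norm_smul, norm_S2, mul_one, Real.norm_eq_abs, abs_of_pos hr]
      rw [← mul_assoc, hpow r hr]
    · apply Measurable.aemeasurable
      simp only [Function.uncurry_def]
      apply Measurable.mul (by fun_prop)
      exact hF' _ _ (by fun_prop) (by fun_prop)
  have hL : ∫⁻ w, ∫⁻ v, ∫⁻ σ : S2, ENNReal.ofReal (‖v - w‖ ^ γ) * Φ (cosTheta v w σ) *
        F (vP v w σ) (vsP v w σ) =
      ∫⁻ z : E3, ∫⁻ σ : S2, ENNReal.ofReal (‖z‖ ^ γ) * Φ (⟪z, (σ : E3)⟫ / ‖z‖) *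
        K (‖z‖ • (σ : E3)) := by
    have h1 : ∀ w, ∫⁻ v, ∫⁻ σ : S2, ENNReal.ofReal (‖v - w‖ ^ γ) * Φ (cosTheta v w σ) *
        F (vP v w σ) (vsP v w σ) = ∫⁻ z : E3, ∫⁻ σ : S2, ENNReal.ofReal (‖z‖ ^ γ) *
          Φ (⟪z, (σ : E3)⟫ / ‖z‖) * F (w + (2⁻¹ : ℝ) • z + (2⁻¹ : ℝ) • (‖z‖ • (σ : E3)))
          (w + (2⁻¹ : ℝ) • z - (2⁻¹ : ℝ) • (‖z‖ • (σ : E3))) := by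
      intro w
      rw [← lintegral_add_left_eq_self _ w]
      refine lintegral_congr fun z => lintegral_congr fun σ => ?_
      simp only [cosTheta, vP, vsP, add_sub_cancel_left]
      congr 2 <;> module
    simp only [h1]
    rw [lintegral_lintegral_swap]
    · refine lintegral_congr fun z => ?_
      rw [lintegral_lintegral_swap]
      · refine lintegral_congr fun σ => ?_
        rw [lintegral_const_mul, hK]
        · rw [← lintegral_sub_right_eq_self _ ((2⁻¹ : ℝ) • z)]
          simp
        · exact hF' _ _ (by fun_prop) (by fun_prop)
      · apply Measurable.aemeasurable
        simp only [Function.uncurry_def]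
        apply Measurable.mul (by fun_prop)
        exact hF' _ _ (by fun_prop) (by fun_prop)
    · apply Measurable.aemeasurable
      apply Measurable.lintegral_prod_right' (f := fun p : (E3 × E3) × S2 =>
        ENNReal.ofReal (‖p.1.2‖ ^ γ) * Φ (⟪p.1.2, (p.2 : E3)⟫ / ‖p.1.2‖) *
          F (p.1.1 + (2⁻¹ : ℝ) • p.1.2 + (2⁻¹ : ℝ) • (‖p.1.2‖ • (p.2 : E3)))
          (p.1.1 + (2⁻¹ : ℝ) • p.1.2 - (2⁻¹ : ℝ) • (‖p.1.2‖ • (p.2 : E3))))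
      apply Measurable.mul (by fun_prop)
      exact hF' _ _ (by fun_prop) (by fun_prop)
  rw [hL, hR, lintegral_polar]
  · have h1 : ∀ ω : S2, ∫⁻ r in Set.Ioi (0 : ℝ), ENNReal.ofReal (r ^ 2) * ∫⁻ σ : S2,
        ENNReal.ofReal (‖r • (ω : E3)‖ ^ γ) * Φ (⟪r • (ω : E3), (σ : E3)⟫ / ‖r • (ω : E3)‖) *
          K (‖r • (ω : E3)‖ • (σ : E3)) =
        ∫⁻ σ : S2, Φ ⟪(ω : E3), (σ : E3)⟫ *
          ∫⁻ r in Set.Ioi (0 : ℝ), ENNReal.ofReal (r ^ (2 + γ)) * K (r • (σ : E3)) := by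
      intro ω
      have e : ∀ r ∈ Set.Ioi (0 : ℝ), ENNReal.ofReal (r ^ 2) * ∫⁻ σ : S2,
        ENNReal.ofReal (‖r • (ω : E3)‖ ^ γ) * Φ (⟪r • (ω : E3), (σ : E3)⟫ / ‖r • (ω : E3)‖) *
          K (‖r • (ω : E3)‖ • (σ : E3)) = ∫⁻ σ : S2, Φ ⟪(ω : E3), (σ : E3)⟫ *
          (ENNReal.ofReal (r ^ (2 + γ)) * K (r • (σ : E3))) := by
        intro r hr
        have hr : 0 < r := hr
        rw [← lintegral_const_mul' _ _ ENNReal.ofReal_ne_top]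
        refine lintegral_congr fun σ => ?_
        have h2 : ‖r • (ω : E3)‖ = r := by
          rw [norm_smul, norm_S2, mul_one, Real.norm_eq_abs, abs_of_pos hr]
        rw [h2, inner_smul_left, ← hpow r hr]
        simp only [conj_trivial]
        rw [mul_div_cancel_left₀ _ hr.ne']
        ring
      rw [setLIntegral_congr_fun measurableSet_Ioi e, lintegral_lintegral_swap]
      · refine lintegral_congr fun σ => ?_
        rw [lintegral_const_mul _ (by fun_prop)]
      · apply Measurable.aemeasurable
        simp only [Function.uncurry_def]
        fun_prop
    simp only [h1]
    have hm : Measurable fun σ : S2 =>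
        ∫⁻ r in Set.Ioi (0 : ℝ), ENNReal.ofReal (r ^ (2 + γ)) * K (r • (σ : E3)) := by
      apply Measurable.lintegral_prod_right'
        (f := fun p : S2 × ℝ => ENNReal.ofReal (p.2 ^ (2 + γ)) * K (p.2 • (p.1 : E3)))
      fun_prop
    rw [lintegral_lintegral_swap, ← lintegral_const_mul _ hm]
    · refine lintegral_congr fun σ => ?_
      rw [lintegral_mul_const _ (by fun_prop)]
      congr 1
      simp_rw [real_inner_comm (σ : E3)]
      rw [← lintegral_zonal Φ hΦ (σ : E3) (norm_S2 σ)]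
    · apply Measurable.aemeasurable
      simp only [Function.uncurry_def]
      apply Measurable.mul (by fun_prop)
      exact hm.comp measurable_snd
  · apply Measurable.lintegral_prod_right' (f := fun p : E3 × S2 =>
      ENNReal.ofReal (‖p.1‖ ^ γ) * Φ (⟪p.1, (p.2 : E3)⟫ / ‖p.1‖) * K (‖p.1‖ • (p.2 : E3)))
    fun_prop

/-! ### Weights and elementary inequalities -/

theorem jap_ge_one (v : E3) : 1 ≤ jap v := by
  rw [jap, Real.one_le_sqrt]; nlinarith [sq_nonneg ‖v‖]

theorem jap_pos (v : E3) : 0 < jap v := one_pos.trans_le (jap_ge_one v)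

theorem jap_sq (v : E3) : jap v ^ 2 = 1 + ‖v‖ ^ 2 := Real.sq_sqrt (by positivity)

theorem norm_le_jap (v : E3) : ‖v‖ ≤ jap v :=
  abs_le_of_sq_le_sq' (by rw [jap_sq]; linarith) (jap_pos v).le |>.2

theorem jap_le (v : E3) : jap v ≤ 1 + ‖v‖ :=
  abs_le_of_sq_le_sq' (by rw [jap_sq]; nlinarith [norm_nonneg v]) (by positivity) |>.2

/-- Peetre's inequality. -/
theorem peetre (u z : E3) : jap (u + z) ≤ 2 * (jap u * jap z) := by
  refine abs_le_of_sq_le_sq' ?_ (by have := jap_pos u; have := jap_pos z; positivity) |>.2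
  rw [mul_pow, mul_pow, jap_sq, jap_sq, jap_sq]
  have h := norm_add_le u z
  have h2 : ‖u + z‖ ^ 2 ≤ (‖u‖ + ‖z‖) ^ 2 := by gcongr
  nlinarith [sq_nonneg (‖u‖ - ‖z‖), mul_nonneg (sq_nonneg ‖u‖) (sq_nonneg ‖z‖), sq_nonneg ‖u‖,
    sq_nonneg ‖z‖]

@[fun_prop]
theorem measurable_jap : Measurable jap := by unfold jap; fun_prop

@[fun_prop]
theorem measurable_maxw : Measurable maxw := by unfold maxw; fun_prop

theorem maxw_nonneg (v : E3) : 0 ≤ maxw v := by unfold maxw; positivity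

/-- Polynomially decaying majorant of every Gaussian factor: `⟨u⟩⁻⁷`. The exponent is at most
`2k - 1` in absolute value, and large enough for `|v - u| ^ γ ⟨u⟩⁻⁷` to be integrable in `u`. -/
def Wt (u : E3) : ℝ := jap u ^ (-7 : ℝ)

@[fun_prop]
theorem measurable_Wt : Measurable Wt := by unfold Wt; fun_prop

theorem Wt_pos (u : E3) : 0 < Wt u := Real.rpow_pos_of_pos (jap_pos u) _

theorem Wt_le_one (u : E3) : Wt u ≤ 1 := Real.rpow_le_one_of_one_le_of_nonpos (jap_ge_one u) (by norm_num)

theorem lintegral_jap_lt_top : ∫⁻ u : E3, ENNReal.ofReal (jap u ^ (-4 : ℝ)) < ∞ := by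
  have h := (integrable_rpow_neg_one_add_norm_sq (E := E3) (μ := volume) (r := 4)
    (by simp; norm_num)).lintegral_lt_top
  convert h using 4 with u
  rw [← jap_sq, ← Real.rpow_natCast, ← Real.rpow_mul (jap_pos u).le]
  norm_num

theorem lintegral_local_lt_top (γ : ℝ) (hγ : -3 < γ) :
    ∫⁻ z : E3, (Metric.ball (0 : E3) 1).indicator (fun z => ENNReal.ofReal (‖z‖ ^ γ)) z < ∞ := by
  rw [lintegral_indicator measurableSet_ball]
  have h : IntegrableOn (fun z : E3 => ‖z‖ ^ γ) (Metric.ball (0 : E3) 1) := by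
    rw [integrableOn_fun_norm_addHaar volume (f := fun r => r ^ γ)]
    have h2 : IntegrableOn (fun y : ℝ => y ^ (2 + γ)) (Set.Ioo 0 1) := by
      rw [intervalIntegral.integrableOn_Ioo_rpow_iff one_pos]; linarith
    refine h2.congr_fun (fun y hy => ?_) measurableSet_Ioo
    have hy : 0 < y := hy.1
    simp [Real.rpow_add hy]
  exact h.lintegral_lt_top

/-- Convolution of `|·| ^ γ` with a decaying weight is of order `⟨v⟩ ^ γ`. -/
theorem kernel_bound (γ : ℝ) (hγ1 : -3 < γ) (hγ2 : γ ≤ 1) : ∃ C : ℝ, 0 < C ∧ ∀ v : E3,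
    ∫⁻ u, ENNReal.ofReal (‖v - u‖ ^ γ * Wt u) ≤ ENNReal.ofReal (C * jap v ^ γ) := by
  set I := ∫⁻ u : E3, ENNReal.ofReal (jap u ^ (-4 : ℝ)) with hI
  set J := ∫⁻ z : E3, (Metric.ball (0 : E3) 1).indicator (fun z => ENNReal.ofReal (‖z‖ ^ γ)) z with hJ
  have hIJ : I + J ≠ ∞ := (ENNReal.add_lt_top.mpr
    ⟨lintegral_jap_lt_top, lintegral_local_lt_top γ hγ1⟩).ne
  suffices H : ∃ D : ℝ, 0 < D ∧ ∀ v u : E3, ENNReal.ofReal (‖v - u‖ ^ γ * Wt u) ≤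
      ENNReal.ofReal (D * jap v ^ γ) * (ENNReal.ofReal (jap u ^ (-4 : ℝ)) +
        (Metric.ball (0 : E3) 1).indicator (fun z => ENNReal.ofReal (‖z‖ ^ γ)) (v - u)) by
    obtain ⟨D, hD, H⟩ := H
    refine ⟨D * ((I + J).toReal + 1), by positivity, fun v => ?_⟩
    have hj := Real.rpow_pos_of_pos (jap_pos v) γ
    calc _ ≤ ∫⁻ u, ENNReal.ofReal (D * jap v ^ γ) * (ENNReal.ofReal (jap u ^ (-4 : ℝ)) +
        (Metric.ball (0 : E3) 1).indicator (fun z => ENNReal.ofReal (‖z‖ ^ γ)) (v - u)) :=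
          lintegral_mono fun u => H v u
      _ = ENNReal.ofReal (D * jap v ^ γ) * (I + J) := by
          rw [lintegral_const_mul' _ _ ENNReal.ofReal_ne_top, lintegral_add_left (by fun_prop),
            lintegral_sub_left_eq_self (fun z =>
              (Metric.ball (0 : E3) 1).indicator (fun z => ENNReal.ofReal (‖z‖ ^ γ)) z) v]
      _ ≤ ENNReal.ofReal (D * jap v ^ γ) * ENNReal.ofReal ((I + J).toReal + 1) := by
          gcongr
          rw [← ENNReal.ofReal_toReal hIJ]
          apply ENNReal.ofReal_le_ofReal
          rw [ENNReal.toReal_ofReal ENNReal.toReal_nonneg]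
          linarith
      _ = _ := by
          rw [← ENNReal.ofReal_mul (by positivity)]
          congr 1; ring
  rcases le_or_gt 0 γ with h0 | h0
  · refine ⟨2 ^ γ, by positivity, fun v u => ?_⟩
    have hv := jap_pos v
    have hu := jap_pos u
    have h1 : ‖v - u‖ ≤ 2 * jap v * jap u := by
      have := norm_sub_le v u
      have := norm_le_jap v
      have := norm_le_jap u
      nlinarith [jap_ge_one v, jap_ge_one u]
    have h2 : ‖v - u‖ ^ γ * Wt u ≤ 2 ^ γ * jap v ^ γ * jap u ^ (-4 : ℝ) := by
      calc ‖v - u‖ ^ γ * Wt u ≤ (2 * jap v * jap u) ^ γ * Wt u :=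
            mul_le_mul_of_nonneg_right (Real.rpow_le_rpow (norm_nonneg _) h1 h0) (Wt_pos u).le
        _ = 2 ^ γ * jap v ^ γ * (jap u ^ (γ + -7)) := by
            rw [Real.mul_rpow (by positivity) hu.le, Real.mul_rpow (by positivity) hv.le, Wt,
              Real.rpow_add hu]; ring
        _ ≤ _ := by
            apply mul_le_mul_of_nonneg_left _ (by positivity)
            exact Real.rpow_le_rpow_of_exponent_le (jap_ge_one u) (by linarith)
    calc _ ≤ ENNReal.ofReal (2 ^ γ * jap v ^ γ * jap u ^ (-4 : ℝ)) := ENNReal.ofReal_le_ofReal h2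
      _ = ENNReal.ofReal (2 ^ γ * jap v ^ γ) * ENNReal.ofReal (jap u ^ (-4 : ℝ)) :=
          ENNReal.ofReal_mul (by positivity)
      _ ≤ _ := by gcongr; exact le_self_add
  · refine ⟨4 ^ (-γ), by positivity, fun v u => ?_⟩
    have hv := jap_pos v
    have hu := jap_pos u
    have hz := jap_pos (v - u)
    -- Peetre's inequality raised to the power `-γ > 0`.
    have h1 : 1 ≤ 2 ^ (-γ) * jap v ^ γ * (jap u ^ (-γ) * jap (v - u) ^ (-γ)) := by
      have := Real.rpow_le_rpow hv.le (by simpa using peetre u (v - u)) (neg_pos.mpr h0).le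
      rw [Real.mul_rpow (by positivity) (by positivity), Real.mul_rpow hu.le hz.le] at this
      calc (1 : ℝ) = jap v ^ γ * jap v ^ (-γ) := by
            rw [← Real.rpow_add hv]; simp
        _ ≤ _ := by
            rw [show 2 ^ (-γ) * jap v ^ γ * (jap u ^ (-γ) * jap (v - u) ^ (-γ)) =
              jap v ^ γ * (2 ^ (-γ) * (jap u ^ (-γ) * jap (v - u) ^ (-γ))) by ring]
            exact mul_le_mul_of_nonneg_left this (by positivity)
    have h2 : jap u ^ (-γ) * Wt u ≤ jap u ^ (-4 : ℝ) := by
      rw [Wt, ← Real.rpow_add hu]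
      exact Real.rpow_le_rpow_of_exponent_le (jap_ge_one u) (by linarith)
    have h2' : jap u ^ (-4 : ℝ) ≤ 1 :=
      Real.rpow_le_one_of_one_le_of_nonpos (jap_ge_one u) (by norm_num)
    have hn : 0 ≤ ‖v - u‖ ^ γ := by positivity
    have hWu := (Wt_pos u).le
    have h3 : ‖v - u‖ ^ γ * Wt u ≤ 2 ^ (-γ) * jap v ^ γ *
        (jap u ^ (-4 : ℝ) * (jap (v - u) ^ (-γ) * ‖v - u‖ ^ γ)) := by
      calc ‖v - u‖ ^ γ * Wt u ≤ (‖v - u‖ ^ γ * Wt u) *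
            (2 ^ (-γ) * jap v ^ γ * (jap u ^ (-γ) * jap (v - u) ^ (-γ))) :=
            le_mul_of_one_le_right (by positivity) h1
        _ = 2 ^ (-γ) * jap v ^ γ *
            ((jap u ^ (-γ) * Wt u) * (jap (v - u) ^ (-γ) * ‖v - u‖ ^ γ)) := by ring
        _ ≤ _ := by gcongr
    have h4 : (4 : ℝ) ^ (-γ) = 2 ^ (-γ) * 2 ^ (-γ) := by
      rw [← Real.mul_rpow (by norm_num) (by norm_num)]; norm_num
    rcases lt_or_ge ‖v - u‖ 1 with hlt | hge
    · rw [Set.indicator_of_mem (by simpa using hlt)]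
      have h5 : jap (v - u) ^ (-γ) ≤ 2 ^ (-γ) :=
        Real.rpow_le_rpow hz.le (by linarith [jap_le (v - u)]) (by linarith)
      have h6 : ‖v - u‖ ^ γ * Wt u ≤ 4 ^ (-γ) * jap v ^ γ * ‖v - u‖ ^ γ := by
        refine h3.trans ?_
        calc _ ≤ 2 ^ (-γ) * jap v ^ γ * (1 * (2 ^ (-γ) * ‖v - u‖ ^ γ)) := by gcongr
          _ = _ := by rw [h4]; ring
      calc _ ≤ ENNReal.ofReal (4 ^ (-γ) * jap v ^ γ * ‖v - u‖ ^ γ) := ENNReal.ofReal_le_ofReal h6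
        _ = ENNReal.ofReal (4 ^ (-γ) * jap v ^ γ) * ENNReal.ofReal (‖v - u‖ ^ γ) :=
          ENNReal.ofReal_mul (by positivity)
        _ ≤ _ := by gcongr; exact le_add_self
    · have h5 : jap (v - u) ^ (-γ) * ‖v - u‖ ^ γ ≤ 2 ^ (-γ) := by
        have hp : 0 < ‖v - u‖ := by linarith
        calc jap (v - u) ^ (-γ) * ‖v - u‖ ^ γ ≤ (2 * ‖v - u‖) ^ (-γ) * ‖v - u‖ ^ γ := by
              gcongr
              · linarith
              · linarith [jap_le (v - u)]
          _ = 2 ^ (-γ) := by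
              rw [Real.mul_rpow (by norm_num) hp.le, mul_assoc, ← Real.rpow_add hp]; simp
      have h6 : ‖v - u‖ ^ γ * Wt u ≤ 4 ^ (-γ) * jap v ^ γ * jap u ^ (-4 : ℝ) := by
        refine h3.trans ?_
        calc _ ≤ 2 ^ (-γ) * jap v ^ γ * (jap u ^ (-4 : ℝ) * 2 ^ (-γ)) := by gcongr
          _ = _ := by rw [h4]; ring
      calc _ ≤ ENNReal.ofReal (4 ^ (-γ) * jap v ^ γ * jap u ^ (-4 : ℝ)) :=
            ENNReal.ofReal_le_ofReal h6
        _ = ENNReal.ofReal (4 ^ (-γ) * jap v ^ γ) * ENNReal.ofReal (jap u ^ (-4 : ℝ)) :=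
          ENNReal.ofReal_mul (by positivity)
        _ ≤ _ := by gcongr; exact le_self_add

/-- The Gaussian absorbs every polynomial weight. -/
theorem gauss_bound (p : ℝ) (hp : 0 ≤ p) : ∃ C : ℝ, 0 < C ∧ ∀ u : E3,
    maxw u * (1 + 2 * ‖u‖) ^ p ≤ C * Wt u := by
  obtain ⟨n, hn⟩ := exists_nat_ge ((p + 7) / 2)
  set c : ℝ := (2 * π) ^ (-(3 : ℝ) / 2) with hc
  have hc0 : 0 < c := by positivity
  refine ⟨c * 3 ^ p * (2 ^ n * n.factorial * Real.exp (1 / 2)), by positivity, fun u => ?_⟩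
  have hu := jap_pos u
  have h1 : (1 + 2 * ‖u‖) ^ p ≤ 3 ^ p * jap u ^ p := by
    rw [← Real.mul_rpow (by norm_num) hu.le]
    apply Real.rpow_le_rpow (by positivity) _ hp
    linarith [jap_ge_one u, norm_le_jap u]
  have h2 : jap u ^ (p + 7) ≤ 2 ^ n * n.factorial * Real.exp (1 / 2) * Real.exp (‖u‖ ^ 2 / 2) := by
    have e := Real.pow_div_factorial_le_exp (x := (1 + ‖u‖ ^ 2) / 2) (by positivity) n
    rw [div_le_iff₀ (by positivity)] at e
    calc jap u ^ (p + 7) ≤ jap u ^ (((2 * n : ℕ) : ℝ)) := by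
          apply Real.rpow_le_rpow_of_exponent_le (jap_ge_one u)
          push_cast; linarith
      _ = (1 + ‖u‖ ^ 2) ^ n := by rw [Real.rpow_natCast, pow_mul, jap_sq]
      _ = 2 ^ n * ((1 + ‖u‖ ^ 2) / 2) ^ n := by rw [← mul_pow]; congr 1; ring
      _ ≤ 2 ^ n * (Real.exp ((1 + ‖u‖ ^ 2) / 2) * n.factorial) := by gcongr
      _ = _ := by rw [show (1 + ‖u‖ ^ 2) / 2 = 1 / 2 + ‖u‖ ^ 2 / 2 by ring, Real.exp_add]; ring
  have h3 : jap u ^ p = jap u ^ (p + 7) * Wt u := by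
    rw [Wt, ← Real.rpow_add hu]; congr 1; ring
  have hW := Wt_pos u
  calc maxw u * (1 + 2 * ‖u‖) ^ p ≤ maxw u * (3 ^ p * jap u ^ p) :=
        mul_le_mul_of_nonneg_left h1 (maxw_nonneg u)
    _ = maxw u * (3 ^ p * (jap u ^ (p + 7) * Wt u)) := by rw [h3]
    _ ≤ maxw u * (3 ^ p * ((2 ^ n * n.factorial * Real.exp (1 / 2) *
          Real.exp (‖u‖ ^ 2 / 2)) * Wt u)) := by
        have := maxw_nonneg u
        gcongr
    _ = c * 3 ^ p * (2 ^ n * n.factorial * Real.exp (1 / 2)) *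
          (Real.exp (-‖u‖ ^ 2 / 2) * Real.exp (‖u‖ ^ 2 / 2)) * Wt u := by
        rw [maxw]; ring
    _ = _ := by
        rw [← Real.exp_add, show -‖u‖ ^ 2 / 2 + ‖u‖ ^ 2 / 2 = 0 by ring]; simp

/-- Splitting of the weight: if `V ≤ x + y`, then `V ^ 2k` is `x ^ k V ^ k` with constant exactly
one, up to terms of lower order in `x` and `V`. -/
theorem weight_split (k : ℝ) (hk : 4 ≤ k) : ∃ C : ℝ, 0 < C ∧ ∀ x y V : ℝ, 0 ≤ x → 1 ≤ y → 1 ≤ V →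
    V ≤ x + y → V ^ (2 * k) ≤ x ^ k * V ^ k +
      C * (y ^ (2 * k) * (x ^ (k - 1 / 2) * V ^ (k - 1 / 2)) + y ^ (2 * k)) := by
  refine ⟨k * 2 ^ k + 2 ^ (2 * k), by positivity, fun x y V hx hy hV hVxy => ?_⟩
  have hy0 : 0 < y := by linarith
  have hV0 : 0 < V := by linarith
  have hk0 : 0 < k := by linarith
  -- If `y ≤ x`, Bernoulli's inequality linearises `(x + y) ^ k` at `x`; otherwise `V ≤ 2 y`.
  rcases le_total y x with hyx | hxy
  · have hx0 : 0 < x := by linarith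
    have hb : V ^ k ≤ x ^ k + k * y * (2 * x) ^ (k - 1) := by
      have hs : 0 < x + y := by linarith
      have h1 := one_add_mul_self_le_rpow_one_add (s := -(y / (x + y)))
        (by rw [neg_le_neg_iff, div_le_one hs]; linarith) (p := k) (by linarith)
      rw [show 1 + -(y / (x + y)) = x / (x + y) by field_simp; ring, Real.div_rpow hx hs.le,
        le_div_iff₀ (by positivity)] at h1
      have h2 : (x + y) ^ k = (x + y) ^ (k - 1) * (x + y) := by
        rw [← Real.rpow_add_one hs.ne']; congr 1; ring
      have h3 : (1 + k * -(y / (x + y))) * (x + y) ^ k = (x + y) ^ k - k * y * (x + y) ^ (k - 1) := by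
        rw [h2]; field_simp; ring
      have h4 : (x + y) ^ (k - 1) ≤ (2 * x) ^ (k - 1) :=
        Real.rpow_le_rpow hs.le (by linarith) (by linarith)
      have h5 : V ^ k ≤ (x + y) ^ k := Real.rpow_le_rpow hV0.le hVxy hk0.le
      have h6 : k * y * (x + y) ^ (k - 1) ≤ k * y * (2 * x) ^ (k - 1) := by gcongr
      linarith
    have hh : V ^ k ≤ (2 * x) ^ (1 / 2 : ℝ) * V ^ (k - 1 / 2) := by
      rw [show k = 1 / 2 + (k - 1 / 2) by ring, Real.rpow_add hV0]
      simp only [add_sub_cancel_left]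
      gcongr
      linarith
    have hyy : y ≤ y ^ (2 * k) := by
      conv_lhs => rw [← Real.rpow_one y]
      exact Real.rpow_le_rpow_of_exponent_le hy (by linarith)
    have e1 : (2 * x) ^ (k - 1) * (2 * x) ^ (1 / 2 : ℝ) ≤ 2 ^ k * x ^ (k - 1 / 2) := by
      rw [← Real.rpow_add (by positivity), Real.mul_rpow (by norm_num) hx,
        show k - 1 + 1 / 2 = k - 1 / 2 by ring]
      gcongr
      · norm_num
      · linarith
    calc V ^ (2 * k) = V ^ k * V ^ k := by rw [two_mul, Real.rpow_add hV0]
      _ ≤ (x ^ k + k * y * (2 * x) ^ (k - 1)) * V ^ k := by gcongr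
      _ = x ^ k * V ^ k + k * y * (2 * x) ^ (k - 1) * V ^ k := by ring
      _ ≤ x ^ k * V ^ k + k * y * (2 * x) ^ (k - 1) *
          ((2 * x) ^ (1 / 2 : ℝ) * V ^ (k - 1 / 2)) := by gcongr
      _ = x ^ k * V ^ k + k * y * ((2 * x) ^ (k - 1) * (2 * x) ^ (1 / 2 : ℝ)) *
            V ^ (k - 1 / 2) := by ring
      _ ≤ x ^ k * V ^ k + k * y ^ (2 * k) * (2 ^ k * x ^ (k - 1 / 2)) * V ^ (k - 1 / 2) := by
          gcongr
      _ = x ^ k * V ^ k + k * 2 ^ k * (y ^ (2 * k) * (x ^ (k - 1 / 2) * V ^ (k - 1 / 2))) := by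
          ring
      _ ≤ _ := by
          gcongr
          · linarith [show (0 : ℝ) < 2 ^ (2 * k) by positivity]
          · linarith [show (0 : ℝ) < y ^ (2 * k) by positivity]
  · have h1 : V ^ (2 * k) ≤ 2 ^ (2 * k) * y ^ (2 * k) := by
      rw [← Real.mul_rpow (by norm_num) hy0.le]
      exact Real.rpow_le_rpow hV0.le (by linarith) (by linarith)
    have h2 : 2 ^ (2 * k) * y ^ (2 * k) ≤ (k * 2 ^ k + 2 ^ (2 * k)) *
        (y ^ (2 * k) * (x ^ (k - 1 / 2) * V ^ (k - 1 / 2)) + y ^ (2 * k)) := by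
      gcongr
      · linarith [show (0 : ℝ) < k * 2 ^ k by positivity]
      · linarith [show (0 : ℝ) ≤ y ^ (2 * k) * (x ^ (k - 1 / 2) * V ^ (k - 1 / 2)) by positivity]
    have h3 : 0 ≤ x ^ k * V ^ k := by positivity
    linarith

/-- Cauchy-Schwarz, with the two factors given through their squares. -/
theorem lintegral_cauchy_schwarz {α : Type} [MeasurableSpace α] (m : Measure α) (T X Y : α → ℝ)
    (hX : Measurable X) (hY : Measurable Y) (hX0 : ∀ a, 0 ≤ X a) (hY0 : ∀ a, 0 ≤ Y a)
    (h : ∀ a, T a ^ 2 ≤ X a * Y a) :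
    ∫⁻ a, ENNReal.ofReal (T a) ∂m ≤ (∫⁻ a, ENNReal.ofReal (X a) ∂m) ^ (1 / 2 : ℝ) *
      (∫⁻ a, ENNReal.ofReal (Y a) ∂m) ^ (1 / 2 : ℝ) := by
  have hsq : ∀ Z : ℝ, 0 ≤ Z → ENNReal.ofReal Z = ENNReal.ofReal (√Z) ^ (2 : ℝ) := fun Z hZ => by
    rw [ENNReal.ofReal_rpow_of_nonneg (Real.sqrt_nonneg _) (by norm_num), Real.rpow_two,
      Real.sq_sqrt hZ]
  have := ENNReal.lintegral_mul_le_Lp_mul_Lq m Real.HolderConjugate.two_two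
    (f := fun a => ENNReal.ofReal √(X a)) (g := fun a => ENNReal.ofReal √(Y a))
    (by fun_prop) (by fun_prop)
  simp only [← hsq _ (hX0 _), ← hsq _ (hY0 _)] at this
  refine le_trans (lintegral_mono fun a => ?_) this
  rw [Pi.mul_apply, ← ENNReal.ofReal_mul (Real.sqrt_nonneg _), ← Real.sqrt_mul (hX0 a)]
  exact ENNReal.ofReal_le_ofReal (Real.le_sqrt_of_sq_le (h a))

/-! ### Collision geometry and integrals over collisions -/

theorem cosTheta_mem (v w : E3) (σ : S2) : cosTheta v w σ ∈ Set.Icc (-1 : ℝ) 1 := by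
  have h := abs_real_inner_le_norm (v - w) (σ : E3)
  rw [norm_S2, mul_one] at h
  rw [cosTheta, Set.mem_Icc, ← abs_le, abs_div, abs_norm]
  exact div_le_one_of_le₀ h (norm_nonneg _)

theorem sinHalf_nonneg (v w : E3) (σ : S2) : 0 ≤ sinHalf v w σ := Real.sqrt_nonneg _

theorem measurable_sinHalf : Measurable fun p : E3 × E3 × S2 => sinHalf p.1 p.2.1 p.2.2 := by
  have := measurable_cosTheta
  unfold sinHalf; fun_prop

/-- `|v - v'| = sin (θ/2) |v - v*|`, valid also for `v = v*`, where both sides vanish. -/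
theorem norm_sub_vP (v w : E3) (σ : S2) : ‖v - vP v w σ‖ = sinHalf v w σ * ‖v - w‖ := by
  have h1 : v - vP v w σ = (2⁻¹ : ℝ) • ((v - w) - ‖v - w‖ • (σ : E3)) := by
    rw [vP]; module
  have h2 : ‖v - vP v w σ‖ ^ 2 = (sinHalf v w σ * ‖v - w‖) ^ 2 := by
    rw [mul_pow, sinHalf, Real.sq_sqrt (by linarith [(cosTheta_mem v w σ).2]), h1, norm_smul, mul_pow,
      norm_sub_sq_real, real_inner_smul_right, norm_smul, norm_S2, cosTheta]
    rcases eq_or_ne ‖v - w‖ 0 with h0 | h0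
    · simp [h0]
    · simp; field_simp; ring
  exact (sq_eq_sq₀ (norm_nonneg _) (mul_nonneg (sinHalf_nonneg _ _ _) (norm_nonneg _))).mp h2

theorem norm_vP_sub_vsP (v w : E3) (σ : S2) : ‖vP v w σ - vsP v w σ‖ = ‖v - w‖ := by
  have h1 : vP v w σ - vsP v w σ = ‖v - w‖ • (σ : E3) := by rw [vP, vsP]; module
  rw [h1, norm_smul, norm_S2]; simp

/-- Conservation of energy. -/
theorem energy (v w : E3) (σ : S2) :
    ‖vP v w σ‖ ^ 2 + ‖vsP v w σ‖ ^ 2 = ‖v‖ ^ 2 + ‖w‖ ^ 2 := by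
  have h := norm_add_sq_real v w
  have h' := norm_sub_sq_real v w
  rw [vP, vsP, norm_add_sq_real, norm_sub_sq_real, norm_smul, norm_smul, norm_S2]
  simp
  nlinarith

theorem sinHalf_le_one (v w : E3) (σ : S2) : sinHalf v w σ ≤ 1 := by
  rw [sinHalf, Real.sqrt_le_one]; linarith [(cosTheta_mem v w σ).1]

/-- `⟨v⟩` is at most `sin (θ/2) ⟨v*'⟩` up to a quantity absorbed by the Gaussian in `v'`. -/
theorem jap_split (v w : E3) (σ : S2) :
    jap v ≤ sinHalf v w σ * jap (vsP v w σ) + (1 + 2 * ‖vP v w σ‖) := by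
  have h1 : ‖v‖ ≤ ‖v - vP v w σ‖ + ‖vP v w σ‖ := by
    simpa using norm_add_le (v - vP v w σ) (vP v w σ)
  have h2 := norm_sub_le (vP v w σ) (vsP v w σ)
  rw [norm_vP_sub_vsP] at h2
  rw [norm_sub_vP] at h1
  have h3 := norm_le_jap (vsP v w σ)
  have s0 := sinHalf_nonneg v w σ
  have s1 := sinHalf_le_one v w σ
  have := jap_le v
  have h4 : sinHalf v w σ * ‖v - w‖ ≤ sinHalf v w σ * jap (vsP v w σ) + ‖vP v w σ‖ := by
    nlinarith [norm_nonneg (vP v w σ), norm_nonneg (vsP v w σ)]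
  linarith

/-- Decay in `v'` and in `v*'` gives decay in `v*`, because `⟨v*⟩ ≤ ⟨v'⟩⟨v*'⟩`. -/
theorem Wt_mul_le (v w : E3) (σ : S2) : Wt (vP v w σ) * Wt (vsP v w σ) ≤ Wt w := by
  have ha := jap_pos (vP v w σ)
  have hc := jap_pos (vsP v w σ)
  rw [Wt, Wt, Wt, ← Real.mul_rpow ha.le hc.le]
  refine Real.rpow_le_rpow_of_nonpos (jap_pos w) ?_ (by norm_num)
  refine abs_le_of_sq_le_sq' ?_ (by positivity) |>.2
  rw [mul_pow, jap_sq, jap_sq, jap_sq]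
  nlinarith [energy v w σ, sq_nonneg ‖v‖, mul_nonneg (sq_nonneg ‖vP v w σ‖) (sq_nonneg ‖vsP v w σ‖)]

theorem lintegral_triple (f : E3 × E3 × S2 → ℝ≥0∞) (hf : Measurable f) :
    ∫⁻ p, f p = ∫⁻ v, ∫⁻ w, ∫⁻ σ, f (v, w, σ) := by
  rw [Measure.volume_eq_prod, lintegral_prod _ hf.aemeasurable]
  refine lintegral_congr fun v => ?_
  rw [Measure.volume_eq_prod, lintegral_prod _ (by fun_prop)]

/-- The angular integral of `bf (cos θ) sin (θ/2) ^ β`, as an extended nonnegative real. -/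
def angN (bf : ℝ → ℝ) (β : ℝ) : ℝ≥0∞ :=
  ∫⁻ σ : S2, ENNReal.ofReal (bf (cos1 σ) * √((1 - cos1 σ) / 2) ^ β)

/-- The bilinear form `∫∫ |v - u| ^ γ M u G v`. -/
def pairJ (γ : ℝ) (M G : E3 → ℝ) : ℝ≥0∞ :=
  ∫⁻ v, ENNReal.ofReal (G v) * ∫⁻ u, ENNReal.ofReal (‖v - u‖ ^ γ * M u)

theorem gradCutoff.bound {bf : ℝ → ℝ} (hbf : gradCutoff bf) : ∃ L : ℝ, 0 < L ∧ ∀ t ≤ 1, bf t ≤ L := by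
  obtain ⟨-, -, ⟨K, hK, h⟩, h0⟩ := hbf
  refine ⟨K⁻¹, by positivity, fun t ht => ?_⟩
  rcases lt_or_ge t 0 with h1 | h1
  · rw [h0 t h1]; positivity
  · exact (h t ⟨h1, ht⟩).2

theorem cos1_mem (σ : S2) : cos1 σ ∈ Set.Icc (-1 : ℝ) 1 :=
  inner_S2_mem ⟨e1, by simp [e1]⟩ σ

theorem measurable_cos1 : Measurable cos1 := by unfold cos1; fun_prop

theorem angN_integrand_le {bf : ℝ → ℝ} {L : ℝ} (hL : 0 < L)
    (h : ∀ t ≤ 1, bf t ≤ L) {β : ℝ} (hβ : 0 ≤ β) {t : ℝ} (ht : t ∈ Set.Icc (-1 : ℝ) 1) :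
    bf t * √((1 - t) / 2) ^ β ≤ L := by
  have h1 : √((1 - t) / 2) ≤ 1 := by rw [Real.sqrt_le_one]; linarith [ht.1]
  have h2 := Real.rpow_le_one (Real.sqrt_nonneg _) h1 hβ
  have h3 : 0 ≤ √((1 - t) / 2) ^ β := by positivity
  calc _ ≤ L * 1 := mul_le_mul (h t ht.2) h2 h3 hL.le
    _ = L := mul_one L

theorem angN_le {bf : ℝ → ℝ} {L : ℝ} (hL : 0 < L)
    (h : ∀ t ≤ 1, bf t ≤ L) {β : ℝ} (hβ : 0 ≤ β) :
    angN bf β ≤ ENNReal.ofReal L * volume (Set.univ : Set S2) := by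
  rw [← lintegral_const]
  exact lintegral_mono fun σ =>
    ENNReal.ofReal_le_ofReal (angN_integrand_le hL h hβ (cos1_mem σ))

theorem angN_ne_top {bf : ℝ → ℝ} (hbf : gradCutoff bf) {β : ℝ} (hβ : 0 ≤ β) : angN bf β ≠ ∞ := by
  obtain ⟨L, hL, h⟩ := hbf.bound
  exact ((angN_le hL h hβ).trans_lt
    (ENNReal.mul_lt_top ENNReal.ofReal_lt_top (measure_lt_top _ _))).ne

theorem angN_eq {bf : ℝ → ℝ} (hbf : gradCutoff bf) {β : ℝ} (hβ : 0 ≤ β) :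
    angN bf β = ENNReal.ofReal (angSin bf β) := by
  have hm := hbf.1
  have hc := measurable_cos1
  have h0 : ∀ σ : S2, 0 ≤ bf (cos1 σ) * √((1 - cos1 σ) / 2) ^ β := fun σ =>
    mul_nonneg (hbf.2.1 _) (by positivity)
  have hmeas : Measurable fun σ : S2 => bf (cos1 σ) * √((1 - cos1 σ) / 2) ^ β := by fun_prop
  obtain ⟨L, hL, h⟩ := hbf.bound
  rw [angN, angSin]
  simp only [sinHalf1]
  rw [ofReal_integral_eq_lintegral_ofReal _ (Filter.Eventually.of_forall h0)]
  refine Integrable.of_bound hmeas.aestronglyMeasurable L (Filter.Eventually.of_forall fun σ => ?_)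
  rw [Real.norm_of_nonneg (h0 σ)]
  exact angN_integrand_le hL h hβ (cos1_mem σ)

section Integrals

variable {γ : ℝ} {bf : ℝ → ℝ}

/-- Integrals in which the two weights sit at the post-collisional velocities. -/
theorem lintegral_post {β : ℝ} (hbf : gradCutoff bf) (H M : E3 → ℝ) (hH : Measurable H) (hM : Measurable M)
    (hH0 : ∀ v, 0 ≤ H v) :
    ∫⁻ p : E3 × E3 × S2, ENNReal.ofReal (‖p.1 - p.2.1‖ ^ γ * bf (cosTheta p.1 p.2.1 p.2.2) *
      sinHalf p.1 p.2.1 p.2.2 ^ β * H (vsP p.1 p.2.1 p.2.2) * M (vP p.1 p.2.1 p.2.2)) =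
    angN bf β * pairJ γ M H := by
  have hm := hbf.1
  have h1 := measurable_cosTheta
  have h2 := measurable_vP
  have h3 := measurable_vsP
  have h4 := measurable_sinHalf
  have hsplit : ∀ p : E3 × E3 × S2, ENNReal.ofReal (‖p.1 - p.2.1‖ ^ γ *
      bf (cosTheta p.1 p.2.1 p.2.2) *
      sinHalf p.1 p.2.1 p.2.2 ^ β * H (vsP p.1 p.2.1 p.2.2) * M (vP p.1 p.2.1 p.2.2)) =
      ENNReal.ofReal (‖p.1 - p.2.1‖ ^ γ) *
        (fun t => ENNReal.ofReal (bf t * √((1 - t) / 2) ^ β)) (cosTheta p.1 p.2.1 p.2.2) *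
        (fun v w => ENNReal.ofReal (H w * M v)) (vP p.1 p.2.1 p.2.2) (vsP p.1 p.2.1 p.2.2) := by
    intro p
    have hb := hbf.2.1 (cosTheta p.1 p.2.1 p.2.2)
    simp only
    rw [← ENNReal.ofReal_mul (by positivity), ← ENNReal.ofReal_mul (by positivity), sinHalf]
    congr 1; ring
  rw [lintegral_congr hsplit, lintegral_triple _ (by fun_prop), lintegral_lintegral_swap]
  · rw [prepost_change γ (fun t => ENNReal.ofReal (bf t * √((1 - t) / 2) ^ β)) (by fun_prop)
      (fun v w => ENNReal.ofReal (H w * M v)) (by unfold Function.uncurry; fun_prop)]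
    rw [angN, pairJ]
    congr 1
    refine lintegral_congr fun w => ?_
    rw [← lintegral_const_mul _ (by fun_prop)]
    refine lintegral_congr fun v => ?_
    rw [← ENNReal.ofReal_mul (by positivity), ← ENNReal.ofReal_mul (hH0 w), norm_sub_rev]
    congr 1; ring
  · refine Measurable.aemeasurable ?_
    have e : Measurable fun q : (E3 × E3) × S2 => (q.1.1, q.1.2, q.2) := by fun_prop
    have h1' := h1.comp e
    have h2' := h2.comp e
    have h3' := h3.comp e
    simp only [Function.comp_def] at h1' h2' h3'
    exact Measurable.lintegral_prod_right' (ν := (volume : Measure S2))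
      (f := fun q : (E3 × E3) × S2 => ENNReal.ofReal (‖q.1.1 - q.1.2‖ ^ γ) *
        ENNReal.ofReal (bf (cosTheta q.1.1 q.1.2 q.2) *
          √((1 - cosTheta q.1.1 q.1.2 q.2) / 2) ^ β) *
        ENNReal.ofReal (H (vsP q.1.1 q.1.2 q.2) * M (vP q.1.1 q.1.2 q.2))) (by fun_prop)

/-- Integrals in which one weight sits at `v` and the other at `v'`. The factor
`sin (θ/2) ^ (3 + γ)` is exactly what the singular change of variables consumes. -/
theorem lintegral_mixed {β : ℝ} (hβ : 0 < β) (hγ : -3 < γ) (hbf : gradCutoff bf) (G M : E3 → ℝ)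
    (hG : Measurable G) (hM : Measurable M) (hG0 : ∀ v, 0 ≤ G v) :
    ∫⁻ p : E3 × E3 × S2, ENNReal.ofReal (‖p.1 - p.2.1‖ ^ γ * bf (cosTheta p.1 p.2.1 p.2.2) *
      sinHalf p.1 p.2.1 p.2.2 ^ (β + (3 + γ)) * G p.1 * M (vP p.1 p.2.1 p.2.2)) =
    angN bf β * pairJ γ M G := by
  have hm := hbf.1
  have h1 := measurable_cosTheta
  have h2 := measurable_vP
  have h4 := measurable_sinHalf
  rw [lintegral_triple _ (by fun_prop), pairJ, ← lintegral_const_mul' _ _ (angN_ne_top hbf hβ.le)]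
  refine lintegral_congr fun v => ?_
  have hsplit : ∀ w : E3, ∀ σ : S2, ENNReal.ofReal (‖v - w‖ ^ γ * bf (cosTheta v w σ) *
      sinHalf v w σ ^ (β + (3 + γ)) * G v * M (vP v w σ)) =
      ENNReal.ofReal (G v) * (ENNReal.ofReal (‖v - w‖ ^ γ) *
        (fun t => ENNReal.ofReal (bf t * √((1 - t) / 2) ^ (β + (3 + γ)))) (cosTheta v w σ) *
        (fun u => ENNReal.ofReal (M u)) (vP v w σ)) := by
    intro w σ
    have hb := hbf.2.1 (cosTheta v w σ)
    simp only
    rw [← ENNReal.ofReal_mul (by positivity), ← ENNReal.ofReal_mul (by positivity),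
      ← ENNReal.ofReal_mul (hG0 v), sinHalf]
    congr 1; ring
  rw [lintegral_congr fun w => lintegral_congr fun σ => hsplit w σ]
  have hc : ∀ f : E3 → S2 → ℝ≥0∞, ∫⁻ w, ∫⁻ σ, ENNReal.ofReal (G v) * f w σ =
      ENNReal.ofReal (G v) * ∫⁻ w, ∫⁻ σ, f w σ := by
    intro f
    rw [← lintegral_const_mul' _ _ ENNReal.ofReal_ne_top]
    exact lintegral_congr fun w => lintegral_const_mul' _ _ ENNReal.ofReal_ne_top
  rw [hc, singular_change γ (fun t => ENNReal.ofReal (bf t * √((1 - t) / 2) ^ (β + (3 + γ))))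
    (fun t => ENNReal.ofReal (bf t * √((1 - t) / 2) ^ β))
    (by fun_prop) (by fun_prop) ?_ ?_ ?_ (fun u => ENNReal.ofReal (M u)) (by fun_prop) v]
  · rw [← mul_assoc, mul_comm (ENNReal.ofReal (G v)), mul_assoc, angN]
    congr 2
    refine lintegral_congr fun u => ?_
    rw [← ENNReal.ofReal_mul (by positivity)]
  · intro t ht
    rw [← ENNReal.ofReal_mul (mul_nonneg (hbf.2.1 _) (by positivity)), mul_assoc,
      Real.rpow_add_of_nonneg (Real.sqrt_nonneg _) hβ.le (by linarith)]
  · simp [Real.zero_rpow hβ.ne']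
  · exact angN_ne_top hbf hβ.le

/-- Integrals in which both weights sit at the pre-collisional velocities. -/
theorem lintegral_pre {L : ℝ} (hL : ∀ t ≤ 1, bf t ≤ L) (hbf : gradCutoff bf)
    (G M : E3 → ℝ) (hG : Measurable G) (hM : Measurable M) (hG0 : ∀ v, 0 ≤ G v) (hM0 : ∀ v, 0 ≤ M v) :
    ∫⁻ p : E3 × E3 × S2, ENNReal.ofReal (‖p.1 - p.2.1‖ ^ γ * bf (cosTheta p.1 p.2.1 p.2.2) *
      G p.1 * M p.2.1) ≤
    ENNReal.ofReal L * volume (Set.univ : Set S2) * pairJ γ M G := by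
  have hm := hbf.1
  have h1 := measurable_cosTheta
  have hT : ENNReal.ofReal L * volume (Set.univ : Set S2) ≠ ∞ :=
    ENNReal.mul_ne_top ENNReal.ofReal_ne_top (measure_ne_top _ _)
  have hL0 : 0 ≤ L := (hbf.2.1 0).trans (hL 0 (by norm_num))
  rw [lintegral_triple _ (by fun_prop), pairJ, ← lintegral_const_mul' _ _ hT]
  refine lintegral_mono fun v => ?_
  rw [← lintegral_const_mul _ (by fun_prop), ← lintegral_const_mul _ (by fun_prop)]
  refine lintegral_mono fun w => ?_
  calc _ ≤ ∫⁻ σ : S2, ENNReal.ofReal (‖v - w‖ ^ γ * L * G v * M w) := by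
        refine lintegral_mono fun σ => ENNReal.ofReal_le_ofReal ?_
        have := hL _ (cosTheta_mem v w σ).2
        have := hG0 v
        have := hM0 w
        gcongr
    _ = _ := by
        rw [lintegral_const, ← ENNReal.ofReal_mul (hG0 v), mul_right_comm (ENNReal.ofReal L),
          ← ENNReal.ofReal_mul hL0]
        congr 2; ring

/-- `lintegral_pre` with the roles of `v` and `v*` exchanged. -/
theorem lintegral_pre' {L : ℝ} (hL : ∀ t ≤ 1, bf t ≤ L) (hbf : gradCutoff bf)
    (G M : E3 → ℝ) (hG : Measurable G) (hM : Measurable M) (hG0 : ∀ v, 0 ≤ G v) (hM0 : ∀ v, 0 ≤ M v) :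
    ∫⁻ p : E3 × E3 × S2, ENNReal.ofReal (‖p.1 - p.2.1‖ ^ γ * bf (cosTheta p.1 p.2.1 p.2.2) *
      G p.2.1 * M p.1) ≤
    ENNReal.ofReal L * volume (Set.univ : Set S2) * pairJ γ M G := by
  refine (le_of_eq ?_).trans ((lintegral_pre (γ := γ) hL hbf M G hM hG hM0 hG0).trans (le_of_eq ?_))
  · exact lintegral_congr fun p => by congr 1; ring
  · congr 1
    have : ∀ A B : E3 → ℝ, Measurable A → Measurable B → (∀ v, 0 ≤ A v) → (∀ v, 0 ≤ B v) →
        pairJ γ A B = ∫⁻ v, ∫⁻ u, ENNReal.ofReal (B v * (‖v - u‖ ^ γ * A u)) := by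
      intro A B hA hB hA0 hB0
      refine lintegral_congr fun v => ?_
      rw [← lintegral_const_mul _ (by fun_prop)]
      exact lintegral_congr fun u => (ENNReal.ofReal_mul (hB0 v)).symm
    rw [this _ _ hG hM hG0 hM0, this _ _ hM hG hM0 hG0, lintegral_lintegral_swap]
    · refine lintegral_congr fun v => lintegral_congr fun u => ?_
      rw [norm_sub_rev]; congr 1; ring
    · unfold Function.uncurry; fun_prop

end Integrals

/-! ### Estimates of the principal and lower-order terms -/

/-- The star norm as a value of `pairJ`. -/
theorem pairJ_maxw (γ k : ℝ) (f : E3 → ℝ)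
    (hf : Integrable (fun p : E3 × E3 =>
        maxw p.2 * ‖p.1 - p.2‖ ^ γ * f p.1 ^ 2 * jap p.1 ^ (2 * k))) :
    pairJ γ maxw (fun v => f v ^ 2 * jap v ^ (2 * k)) = ENNReal.ofReal (starSq γ k f) := by
  have h0 : ∀ v w : E3, 0 ≤ maxw w * ‖v - w‖ ^ γ * f v ^ 2 * jap v ^ (2 * k) := fun v w => by
    have := maxw_nonneg w
    have := jap_pos v
    positivity
  have e : starSq γ k f = ∫ p : E3 × E3,
      maxw p.2 * ‖p.1 - p.2‖ ^ γ * f p.1 ^ 2 * jap p.1 ^ (2 * k) := by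
    rw [starSq, Measure.volume_eq_prod, integral_prod _ hf]
  rw [e, ofReal_integral_eq_lintegral_ofReal hf (Filter.Eventually.of_forall fun p => h0 p.1 p.2),
    Measure.volume_eq_prod, lintegral_prod _ hf.1.aemeasurable.ennreal_ofReal, pairJ]
  refine lintegral_congr fun v => ?_
  rw [← lintegral_const_mul _ (by fun_prop)]
  refine lintegral_congr fun w => ?_
  have := jap_pos v
  rw [← ENNReal.ofReal_mul (by positivity)]
  congr 1; ring

/-- With the weight `Wt` in place of the Gaussian, convolution with the kernel gives a factor
`⟨v⟩ ^ γ`, which completes `⟨v⟩ ^ (2k - 1)` to the weight of the lower-order norm. -/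
theorem pairJ_Wt_le {γ C k : ℝ}
    (hK : ∀ v, ∫⁻ u, ENNReal.ofReal (‖v - u‖ ^ γ * Wt u) ≤ ENNReal.ofReal (C * jap v ^ γ))
    (f : E3 → ℝ) (hC : 0 ≤ C)
    (hf : Integrable (fun v : E3 => f v ^ 2 * jap v ^ (2 * (k + γ / 2 - 1 / 2)))) :
    pairJ γ Wt (fun v => f v ^ 2 * jap v ^ (2 * k - 1)) ≤
      ENNReal.ofReal C * ENNReal.ofReal (wSqR (k + γ / 2 - 1 / 2) f) := by
  have h0 : ∀ v : E3, 0 ≤ f v ^ 2 * jap v ^ (2 * (k + γ / 2 - 1 / 2)) := fun v => by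
    have := jap_pos v
    positivity
  rw [wSqR, ofReal_integral_eq_lintegral_ofReal hf (Filter.Eventually.of_forall h0),
    ← lintegral_const_mul' _ _ ENNReal.ofReal_ne_top, pairJ]
  refine lintegral_mono fun v => ?_
  have hj := jap_pos v
  calc _ ≤ ENNReal.ofReal (f v ^ 2 * jap v ^ (2 * k - 1)) * ENNReal.ofReal (C * jap v ^ γ) := by
        gcongr
        exact hK v
    _ = _ := by
        rw [← ENNReal.ofReal_mul (by positivity), ← ENNReal.ofReal_mul hC,
          show 2 * (k + γ / 2 - 1 / 2) = (2 * k - 1) + γ by ring, Real.rpow_add hj]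
        congr 1; ring

theorem pairJ_mono {γ : ℝ} {M G G' : E3 → ℝ} (h : ∀ v, G v ≤ G' v) : pairJ γ M G ≤ pairJ γ M G' :=
  lintegral_mono fun v => by gcongr; exact h v

/-- Pointwise bound of the gain integrand: a principal part with sharp constant and two
lower-order terms. -/
theorem gain_pointwise {k C₁ C₂ P x y V h μ W g : ℝ}
    (hC₁ : 0 ≤ C₁) (hP : 0 ≤ P) (hx : 0 ≤ x) (hV : 1 ≤ V) (hh : 0 ≤ h) (hμ : 0 ≤ μ)
    (hg : 0 ≤ g)
    (h1 : V ^ (2 * k) ≤ x ^ k * V ^ k +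
      C₁ * (y ^ (2 * k) * (x ^ (k - 1 / 2) * V ^ (k - 1 / 2)) + y ^ (2 * k)))
    (h2 : μ * y ^ (2 * k) ≤ C₂ * W) :
    P * h * μ * g * V ^ (2 * k) ≤ P * (x ^ k) * h * μ * g * V ^ k +
      C₁ * C₂ * (P * h * W * g * (x ^ (k - 1 / 2) * V ^ (k - 1 / 2))) +
      C₁ * C₂ * (P * h * W * g) := by
  have hV0 : 0 < V := by linarith
  calc P * h * μ * g * V ^ (2 * k) ≤ P * h * μ * g * (x ^ k * V ^ k +
      C₁ * (y ^ (2 * k) * (x ^ (k - 1 / 2) * V ^ (k - 1 / 2)) + y ^ (2 * k))) := by gcongr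
    _ = P * (x ^ k) * h * μ * g * V ^ k + C₁ * P * h * g * (x ^ (k - 1 / 2) * V ^ (k - 1 / 2)) *
        (μ * y ^ (2 * k)) + C₁ * P * h * g * (μ * y ^ (2 * k)) := by ring
    _ ≤ P * (x ^ k) * h * μ * g * V ^ k + C₁ * P * h * g * (x ^ (k - 1 / 2) * V ^ (k - 1 / 2)) *
        (C₂ * W) + C₁ * P * h * g * (C₂ * W) := by gcongr
    _ = _ := by ring

theorem rpow_half_mul (D a b : ℝ≥0∞) :
    (D * a) ^ (1 / 2 : ℝ) * (D * b) ^ (1 / 2 : ℝ) = D * (a ^ (1 / 2 : ℝ) * b ^ (1 / 2 : ℝ)) := by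
  rw [ENNReal.mul_rpow_of_nonneg _ _ (by norm_num), ENNReal.mul_rpow_of_nonneg _ _ (by norm_num),
    mul_mul_mul_comm]
  congr 1
  rw [← ENNReal.rpow_add_of_nonneg _ _ (by norm_num) (by norm_num)]
  norm_num

theorem rpow_sq_eq {t : ℝ} (ht : 0 ≤ t) (a : ℝ) : (t ^ a) ^ 2 = t ^ (2 * a) := by
  rw [← Real.rpow_natCast, ← Real.rpow_mul ht]
  congr 1; push_cast; ring

/-- The collision kernel `|v - v*| ^ γ b (cos θ)`. -/
def ker (γ : ℝ) (bf : ℝ → ℝ) (p : E3 × E3 × S2) : ℝ :=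
  ‖p.1 - p.2.1‖ ^ γ * bf (cosTheta p.1 p.2.1 p.2.2)

theorem measurable_ker {γ : ℝ} {bf : ℝ → ℝ} (hbf : gradCutoff bf) : Measurable (ker γ bf) := by
  have := hbf.1
  have := measurable_cosTheta
  unfold ker; fun_prop

theorem ker_nonneg {γ : ℝ} {bf : ℝ → ℝ} (hbf : gradCutoff bf) (p : E3 × E3 × S2) : 0 ≤ ker γ bf p :=
  mul_nonneg (by positivity) (hbf.2.1 _)

/-- The principal term. The powers of `sin (θ/2)` are distributed unevenly in the Cauchy-Schwarz
inequality, so that after the two changes of variables both factors carry the same angular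
integral. -/
theorem term_principal {γ k : ℝ} {bf : ℝ → ℝ} (hγ1 : -3 < γ) (hγ2 : γ ≤ 1) (hk : 4 ≤ k)
    (hbf : gradCutoff bf) {h g : E3 → ℝ} (hh : Measurable h) (hg : Measurable g) :
    ∫⁻ p : E3 × E3 × S2, ENNReal.ofReal (ker γ bf p *
      (sinHalf p.1 p.2.1 p.2.2 * jap (vsP p.1 p.2.1 p.2.2)) ^ k * |h (vsP p.1 p.2.1 p.2.2)| *
      maxw (vP p.1 p.2.1 p.2.2) * |g p.1| * jap p.1 ^ k) ≤
    angN bf (k - (3 + γ) / 2) * ((pairJ γ maxw (fun v => h v ^ 2 * jap v ^ (2 * k))) ^ (1 / 2 : ℝ) *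
      (pairJ γ maxw (fun v => g v ^ 2 * jap v ^ (2 * k))) ^ (1 / 2 : ℝ)) := by
  have hα : 0 < k - (3 + γ) / 2 := by linarith
  have m0 := measurable_ker (γ := γ) hbf
  have m2 := measurable_vP
  have m3 := measurable_vsP
  have m4 := measurable_sinHalf
  rw [← rpow_half_mul, ← lintegral_post (γ := γ) hbf _ _ (by fun_prop) (by fun_prop)
    (fun v => by have := jap_pos v; positivity),
    ← lintegral_mixed hα hγ1 hbf _ _ (by fun_prop) (by fun_prop)
    (fun v => by have := jap_pos v; positivity)]
  refine lintegral_cauchy_schwarz _ _ (fun p => ker γ bf p * sinHalf p.1 p.2.1 p.2.2 ^ (k - (3 + γ) / 2) *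
    (h (vsP p.1 p.2.1 p.2.2) ^ 2 * jap (vsP p.1 p.2.1 p.2.2) ^ (2 * k)) * maxw (vP p.1 p.2.1 p.2.2))
    (fun p => ker γ bf p * sinHalf p.1 p.2.1 p.2.2 ^ (k - (3 + γ) / 2 + (3 + γ)) *
    (g p.1 ^ 2 * jap p.1 ^ (2 * k)) * maxw (vP p.1 p.2.1 p.2.2)) (by fun_prop) (by fun_prop) ?_ ?_ ?_
  all_goals intro p
  all_goals
    have h1 := ker_nonneg (γ := γ) hbf p
    have h2 := maxw_nonneg (vP p.1 p.2.1 p.2.2)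
    have h3 := sinHalf_nonneg p.1 p.2.1 p.2.2
    have h4 := jap_pos (vsP p.1 p.2.1 p.2.2)
    have h5 := jap_pos p.1
  · positivity
  · positivity
  · rw [Real.mul_rpow h3 h4.le]
    simp only [mul_pow, sq_abs, rpow_sq_eq h3, rpow_sq_eq h4.le, rpow_sq_eq h5.le]
    rw [show 2 * k = (k - (3 + γ) / 2) + (k - (3 + γ) / 2 + (3 + γ)) by ring,
      Real.rpow_add_of_nonneg h3 (by linarith) (by linarith)]
    apply le_of_eq
    ring

/-- The lower-order gain term with the highest powers of the weights. -/
theorem term_cross {γ k L : ℝ} {bf : ℝ → ℝ} (hγ1 : -3 < γ) (hγ2 : γ ≤ 1) (hk : 4 ≤ k)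
    (hbf : gradCutoff bf) (hL : 0 < L) (hbL : ∀ t ≤ 1, bf t ≤ L)
    {h g : E3 → ℝ} (hh : Measurable h) (hg : Measurable g) :
    ∫⁻ p : E3 × E3 × S2, ENNReal.ofReal (ker γ bf p * |h (vsP p.1 p.2.1 p.2.2)| *
      Wt (vP p.1 p.2.1 p.2.2) * |g p.1| *
      ((sinHalf p.1 p.2.1 p.2.2 * jap (vsP p.1 p.2.1 p.2.2)) ^ (k - 1 / 2) * jap p.1 ^ (k - 1 / 2))) ≤
    ENNReal.ofReal L * volume (Set.univ : Set S2) *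
      ((pairJ γ Wt (fun v => h v ^ 2 * jap v ^ (2 * k - 1))) ^ (1 / 2 : ℝ) *
      (pairJ γ Wt (fun v => g v ^ 2 * jap v ^ (2 * k - 1))) ^ (1 / 2 : ℝ)) := by
  have hα : 0 < 2 * k - 1 - (3 + γ) := by linarith
  have m0 := measurable_ker (γ := γ) hbf
  have m2 := measurable_vP
  have m3 := measurable_vsP
  have m4 := measurable_sinHalf
  rw [← rpow_half_mul]
  calc _ ≤ (angN bf 0 * pairJ γ Wt (fun v => h v ^ 2 * jap v ^ (2 * k - 1))) ^ (1 / 2 : ℝ) *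
      (angN bf (2 * k - 1 - (3 + γ)) *
        pairJ γ Wt (fun v => g v ^ 2 * jap v ^ (2 * k - 1))) ^ (1 / 2 : ℝ) := ?_
    _ ≤ _ := by
        gcongr
        · exact angN_le hL hbL le_rfl
        · exact angN_le hL hbL hα.le
  rw [← lintegral_post (γ := γ) hbf _ _ (by fun_prop) (by fun_prop)
    (fun v => by have := jap_pos v; positivity),
    ← lintegral_mixed hα hγ1 hbf _ _ (by fun_prop) (by fun_prop)
    (fun v => by have := jap_pos v; positivity)]
  refine lintegral_cauchy_schwarz _ _ (fun p => ker γ bf p * sinHalf p.1 p.2.1 p.2.2 ^ (0 : ℝ) *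
    (h (vsP p.1 p.2.1 p.2.2) ^ 2 * jap (vsP p.1 p.2.1 p.2.2) ^ (2 * k - 1)) * Wt (vP p.1 p.2.1 p.2.2))
    (fun p => ker γ bf p * sinHalf p.1 p.2.1 p.2.2 ^ (2 * k - 1 - (3 + γ) + (3 + γ)) *
    (g p.1 ^ 2 * jap p.1 ^ (2 * k - 1)) * Wt (vP p.1 p.2.1 p.2.2)) (by fun_prop) (by fun_prop) ?_ ?_ ?_
  all_goals intro p
  all_goals
    have h1 := ker_nonneg (γ := γ) hbf p
    have h2 := Wt_pos (vP p.1 p.2.1 p.2.2)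
    have h3 := sinHalf_nonneg p.1 p.2.1 p.2.2
    have h4 := jap_pos (vsP p.1 p.2.1 p.2.2)
    have h5 := jap_pos p.1
  · positivity
  · positivity
  · rw [Real.mul_rpow h3 h4.le]
    simp only [mul_pow, sq_abs, rpow_sq_eq h3, rpow_sq_eq h4.le, rpow_sq_eq h5.le]
    rw [show 2 * (k - 1 / 2) = 2 * k - 1 by ring, Real.rpow_zero, sub_add_cancel]
    apply le_of_eq
    ring

/-- `⟨w⟩ ^ (2k - 1)` compensates the weight `Wt w`. -/
theorem one_le_jap_mul_Wt {k : ℝ} (hk : 4 ≤ k) (w : E3) : 1 ≤ jap w ^ (2 * k - 1) * Wt w := by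
  rw [Wt, ← Real.rpow_add (jap_pos w)]
  exact Real.one_le_rpow (jap_ge_one w) (by linarith)

/-- The lower-order gain term without weights. The decay in `v*'` supplied by the weight on `h`
and the decay in `v'` combine, by conservation of energy, to decay in `v*`. -/
theorem term_gain {γ k L : ℝ} {bf : ℝ → ℝ} (hk : 4 ≤ k)
    (hbf : gradCutoff bf) (hL : 0 < L) (hbL : ∀ t ≤ 1, bf t ≤ L)
    {h g : E3 → ℝ} (hh : Measurable h) (hg : Measurable g) :
    ∫⁻ p : E3 × E3 × S2, ENNReal.ofReal (ker γ bf p * |h (vsP p.1 p.2.1 p.2.2)| *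
      Wt (vP p.1 p.2.1 p.2.2) * |g p.1|) ≤
    ENNReal.ofReal L * volume (Set.univ : Set S2) *
      ((pairJ γ Wt (fun v => h v ^ 2 * jap v ^ (2 * k - 1))) ^ (1 / 2 : ℝ) *
      (pairJ γ Wt (fun v => g v ^ 2 * jap v ^ (2 * k - 1))) ^ (1 / 2 : ℝ)) := by
  have m0 := measurable_ker (γ := γ) hbf
  have m2 := measurable_vP
  have m3 := measurable_vsP
  have m4 := measurable_sinHalf
  rw [← rpow_half_mul]
  calc _ ≤ (angN bf 0 * pairJ γ Wt (fun v => h v ^ 2 * jap v ^ (2 * k - 1))) ^ (1 / 2 : ℝ) *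
      (∫⁻ p : E3 × E3 × S2, ENNReal.ofReal (ker γ bf p *
        (g p.1 ^ 2 * jap p.1 ^ (2 * k - 1)) * Wt p.2.1)) ^ (1 / 2 : ℝ) := ?_
    _ ≤ _ := by
        gcongr
        · exact angN_le hL hbL le_rfl
        · exact lintegral_pre hbL hbf (fun v => g v ^ 2 * jap v ^ (2 * k - 1)) Wt (by fun_prop)
            (by fun_prop) (fun v => by have := jap_pos v; positivity) (fun v => (Wt_pos v).le)
  rw [← lintegral_post (γ := γ) hbf _ _ (by fun_prop) (by fun_prop)
    (fun v => by have := jap_pos v; positivity)]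
  refine lintegral_cauchy_schwarz _ _ (fun p => ker γ bf p * sinHalf p.1 p.2.1 p.2.2 ^ (0 : ℝ) *
    (h (vsP p.1 p.2.1 p.2.2) ^ 2 * jap (vsP p.1 p.2.1 p.2.2) ^ (2 * k - 1)) * Wt (vP p.1 p.2.1 p.2.2))
    (fun p => ker γ bf p * (g p.1 ^ 2 * jap p.1 ^ (2 * k - 1)) * Wt p.2.1)
    (by fun_prop) (by fun_prop) ?_ ?_ ?_
  all_goals intro p
  all_goals
    have h1 := ker_nonneg (γ := γ) hbf p
    have h2 := Wt_pos (vP p.1 p.2.1 p.2.2)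
    have h2' := Wt_pos p.2.1
    have h3 := sinHalf_nonneg p.1 p.2.1 p.2.2
    have h4 := jap_pos (vsP p.1 p.2.1 p.2.2)
    have h5 := jap_pos p.1
  · positivity
  · positivity
  · have e1 := Wt_mul_le p.1 p.2.1 p.2.2
    have e2 := one_le_jap_mul_Wt hk (vsP p.1 p.2.1 p.2.2)
    have e3 : 1 ≤ jap p.1 ^ (2 * k - 1) := Real.one_le_rpow (jap_ge_one _) (by linarith)
    have h6 := Wt_pos (vsP p.1 p.2.1 p.2.2)
    have e4 : Wt (vP p.1 p.2.1 p.2.2) ≤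
        jap (vsP p.1 p.2.1 p.2.2) ^ (2 * k - 1) * Wt p.2.1 * jap p.1 ^ (2 * k - 1) :=
      calc _ ≤ Wt (vP p.1 p.2.1 p.2.2) *
            (jap (vsP p.1 p.2.1 p.2.2) ^ (2 * k - 1) * Wt (vsP p.1 p.2.1 p.2.2)) :=
            le_mul_of_one_le_right h2.le e2
        _ = jap (vsP p.1 p.2.1 p.2.2) ^ (2 * k - 1) *
            (Wt (vP p.1 p.2.1 p.2.2) * Wt (vsP p.1 p.2.1 p.2.2)) := by ring
        _ ≤ jap (vsP p.1 p.2.1 p.2.2) ^ (2 * k - 1) * Wt p.2.1 := by gcongr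
        _ ≤ _ := le_mul_of_one_le_right (by positivity) e3
    simp only [mul_pow, sq_abs, Real.rpow_zero]
    calc _ = ker γ bf p ^ 2 * h (vsP p.1 p.2.1 p.2.2) ^ 2 * Wt (vP p.1 p.2.1 p.2.2) * g p.1 ^ 2 *
          Wt (vP p.1 p.2.1 p.2.2) := by ring
      _ ≤ ker γ bf p ^ 2 * h (vsP p.1 p.2.1 p.2.2) ^ 2 * Wt (vP p.1 p.2.1 p.2.2) * g p.1 ^ 2 *
          (jap (vsP p.1 p.2.1 p.2.2) ^ (2 * k - 1) * Wt p.2.1 * jap p.1 ^ (2 * k - 1)) := by gcongr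
      _ = _ := by ring

/-- The loss term. -/
theorem term_loss {γ k L : ℝ} {bf : ℝ → ℝ} (hk : 4 ≤ k)
    (hbf : gradCutoff bf) (hbL : ∀ t ≤ 1, bf t ≤ L)
    {h g : E3 → ℝ} (hh : Measurable h) (hg : Measurable g) :
    ∫⁻ p : E3 × E3 × S2, ENNReal.ofReal (ker γ bf p * |h p.2.1| * Wt p.1 * |g p.1|) ≤
    ENNReal.ofReal L * volume (Set.univ : Set S2) *
      ((pairJ γ Wt (fun v => h v ^ 2 * jap v ^ (2 * k - 1))) ^ (1 / 2 : ℝ) *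
      (pairJ γ Wt (fun v => g v ^ 2 * jap v ^ (2 * k - 1))) ^ (1 / 2 : ℝ)) := by
  have m0 := measurable_ker (γ := γ) hbf
  rw [← rpow_half_mul]
  calc _ ≤ (∫⁻ p : E3 × E3 × S2, ENNReal.ofReal (ker γ bf p *
        (h p.2.1 ^ 2 * jap p.2.1 ^ (2 * k - 1)) * Wt p.1)) ^ (1 / 2 : ℝ) *
      (∫⁻ p : E3 × E3 × S2, ENNReal.ofReal (ker γ bf p *
        (g p.1 ^ 2 * jap p.1 ^ (2 * k - 1)) * Wt p.2.1)) ^ (1 / 2 : ℝ) := ?_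
    _ ≤ _ := by
        gcongr
        · exact lintegral_pre' hbL hbf (fun v => h v ^ 2 * jap v ^ (2 * k - 1)) Wt (by fun_prop)
            (by fun_prop) (fun v => by have := jap_pos v; positivity) (fun v => (Wt_pos v).le)
        · exact lintegral_pre hbL hbf (fun v => g v ^ 2 * jap v ^ (2 * k - 1)) Wt (by fun_prop)
            (by fun_prop) (fun v => by have := jap_pos v; positivity) (fun v => (Wt_pos v).le)
  refine lintegral_cauchy_schwarz _ _ _ _ (by fun_prop) (by fun_prop) ?_ ?_ ?_
  all_goals intro p
  all_goals
    have h1 := ker_nonneg (γ := γ) hbf p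
    have h2 := Wt_pos p.1
    have h2' := Wt_pos p.2.1
    have h4 := jap_pos p.2.1
    have h5 := jap_pos p.1
  · positivity
  · positivity
  · have e2 := one_le_jap_mul_Wt hk p.2.1
    have e3 := one_le_jap_mul_Wt hk p.1
    have e4 : Wt p.1 ^ 2 ≤ 1 := pow_le_one₀ h2.le (Wt_le_one _)
    simp only [mul_pow, sq_abs]
    calc _ = ker γ bf p ^ 2 * h p.2.1 ^ 2 * g p.1 ^ 2 * Wt p.1 ^ 2 := by ring
      _ ≤ ker γ bf p ^ 2 * h p.2.1 ^ 2 * g p.1 ^ 2 *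
          ((jap p.2.1 ^ (2 * k - 1) * Wt p.2.1) * (jap p.1 ^ (2 * k - 1) * Wt p.1)) := by
          gcongr
          exact e4.trans (one_le_mul_of_one_le_of_one_le e2 e3)
      _ = _ := by ring

/-! ### Conclusion -/

/-- The triangle inequality, separating gain from loss. No integrability is needed: where a
Bochner integral on the left fails to converge it has the value zero. -/
theorem ofReal_abs_integral_le {γ k : ℝ} {bf : ℝ → ℝ} (hbf : gradCutoff bf) {h g : E3 → ℝ}
    (hh : Measurable h) (hg : Measurable g) :
    ENNReal.ofReal |∫ v : E3, Qcol γ bf h maxw v * g v * jap v ^ (2 * k)| ≤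
      (∫⁻ p : E3 × E3 × S2, ENNReal.ofReal (ker γ bf p * |h (vsP p.1 p.2.1 p.2.2)| *
        maxw (vP p.1 p.2.1 p.2.2) * |g p.1| * jap p.1 ^ (2 * k))) +
      ∫⁻ p : E3 × E3 × S2, ENNReal.ofReal (ker γ bf p * |h p.2.1| *
        maxw p.1 * |g p.1| * jap p.1 ^ (2 * k)) := by
  have m0 := measurable_ker (γ := γ) hbf
  have m2 := measurable_vP
  have m3 := measurable_vsP
  rw [← lintegral_add_left (by fun_prop), lintegral_triple _ (by fun_prop),
    ← Real.enorm_eq_ofReal_abs]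
  refine (enorm_integral_le_lintegral_enorm _).trans (lintegral_mono fun v => ?_)
  have hj := jap_pos v
  have hc : ‖g v * jap v ^ (2 * k)‖ₑ ≠ ∞ := enorm_ne_top
  calc ‖Qcol γ bf h maxw v * g v * jap v ^ (2 * k)‖ₑ
      = ‖Qcol γ bf h maxw v‖ₑ * ‖g v * jap v ^ (2 * k)‖ₑ := by rw [mul_assoc, enorm_mul]
    _ ≤ (∫⁻ w, ∫⁻ σ : S2, ‖‖v - w‖ ^ γ * bf (cosTheta v w σ) *
          (h (vsP v w σ) * maxw (vP v w σ) - h w * maxw v)‖ₑ) * ‖g v * jap v ^ (2 * k)‖ₑ := by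
        gcongr
        exact (enorm_integral_le_lintegral_enorm _).trans
          (lintegral_mono fun w => enorm_integral_le_lintegral_enorm _)
    _ = ∫⁻ w, ∫⁻ σ : S2, ‖‖v - w‖ ^ γ * bf (cosTheta v w σ) *
          (h (vsP v w σ) * maxw (vP v w σ) - h w * maxw v)‖ₑ * ‖g v * jap v ^ (2 * k)‖ₑ := by
        rw [← lintegral_mul_const' _ _ hc]
        exact lintegral_congr fun w => (lintegral_mul_const' _ _ hc).symm
    _ ≤ _ := by
        refine lintegral_mono fun w => lintegral_mono fun σ => ?_
        have h1 : 0 ≤ ‖v - w‖ ^ γ * bf (cosTheta v w σ) := ker_nonneg hbf (v, w, σ)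
        have h2 := maxw_nonneg (vP v w σ)
        have h3 := maxw_nonneg v
        simp only [ker]
        rw [← ENNReal.ofReal_add (by positivity) (by positivity), ← enorm_mul,
          Real.enorm_eq_ofReal_abs]
        apply ENNReal.ofReal_le_ofReal
        have e : |h (vsP v w σ) * maxw (vP v w σ) - h w * maxw v| ≤
            |h (vsP v w σ)| * maxw (vP v w σ) + |h w| * maxw v := by
          refine (abs_sub _ _).trans (le_of_eq ?_)
          rw [abs_mul, abs_mul, abs_of_nonneg h2, abs_of_nonneg h3]
        rw [abs_mul, abs_mul, abs_of_nonneg h1, abs_mul, abs_of_nonneg (a := jap v ^ (2 * k))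
          (by positivity)]
        calc _ ≤ ‖v - w‖ ^ γ * bf (cosTheta v w σ) *
            (|h (vsP v w σ)| * maxw (vP v w σ) + |h w| * maxw v) * (|g v| * jap v ^ (2 * k)) := by
              gcongr
          _ = _ := by ring

theorem ofReal_rpow_half (x : ℝ) : ENNReal.ofReal x ^ (1 / 2 : ℝ) = ENNReal.ofReal √x := by
  rcases le_total 0 x with hx | hx
  · rw [ENNReal.ofReal_rpow_of_nonneg hx (by norm_num), Real.sqrt_eq_rpow]
  · rw [Real.sqrt_eq_zero_of_nonpos hx, ENNReal.ofReal_of_nonpos hx, ENNReal.ofReal_zero,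
      ENNReal.zero_rpow_of_pos (by norm_num)]

/-- estimate of (Q(h,μ), g⟨v⟩^{2k}) for -3 < γ ≤ 1 and k ≥ 4, for all
h, g for which all the integrals involved converge absolutely. -/
theorem stmt10 (γ k : ℝ) (hγ1 : -3 < γ) (hγ2 : γ ≤ 1) (hk : 4 ≤ k)
    (bf : ℝ → ℝ) (hbf : gradCutoff bf) :
    ∃ C : ℝ, 0 < C ∧ ∀ h g : E3 → ℝ, Measurable h → Measurable g →
      -- absolute convergence of the gain part of the triple integral
      Integrable (fun p : E3 × E3 × S2 =>
        ‖p.1 - p.2.1‖ ^ γ * bf (cosTheta p.1 p.2.1 p.2.2) *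
          h (vsP p.1 p.2.1 p.2.2) * maxw (vP p.1 p.2.1 p.2.2) * g p.1 * jap p.1 ^ (2 * k)) →
      -- absolute convergence of the loss part of the triple integral
      Integrable (fun p : E3 × E3 × S2 =>
        ‖p.1 - p.2.1‖ ^ γ * bf (cosTheta p.1 p.2.1 p.2.2) *
          h p.2.1 * maxw p.1 * g p.1 * jap p.1 ^ (2 * k)) →
      -- convergence of the star norms
      Integrable (fun p : E3 × E3 =>
        maxw p.2 * ‖p.1 - p.2‖ ^ γ * h p.1 ^ 2 * jap p.1 ^ (2 * k)) →
      Integrable (fun p : E3 × E3 =>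
        maxw p.2 * ‖p.1 - p.2‖ ^ γ * g p.1 ^ 2 * jap p.1 ^ (2 * k)) →
      -- convergence of the weighted L² norms
      Integrable (fun v : E3 => h v ^ 2 * jap v ^ (2 * (k + γ / 2 - 1 / 2))) →
      Integrable (fun v : E3 => g v ^ 2 * jap v ^ (2 * (k + γ / 2 - 1 / 2))) →
      |∫ v : E3, Qcol γ bf h maxw v * g v * jap v ^ (2 * k)| ≤
        angSin bf (k - (3 + γ) / 2) * starNorm γ k h * starNorm γ k g +
          C * wNorm (k + γ / 2 - 1 / 2) h * wNorm (k + γ / 2 - 1 / 2) g := by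
  obtain ⟨L, hL, hbL⟩ := hbf.bound
  obtain ⟨C, hC, hCker⟩ := kernel_bound γ hγ1 hγ2
  obtain ⟨C₁, hC₁, hsplit⟩ := weight_split k hk
  obtain ⟨C₂, hC₂, hgauss⟩ := gauss_bound (2 * k) (by linarith)
  set B : ℝ≥0∞ := ENNReal.ofReal L * volume (Set.univ : Set S2) with hBdef
  have hBtop : B ≠ ∞ := ENNReal.mul_ne_top ENNReal.ofReal_ne_top (measure_ne_top _ _)
  have hc12 : 0 < C₁ * C₂ := by positivity
  -- The summand `1` only serves to make the constant positive.
  refine ⟨(2 * (C₁ * C₂) + C₂) * (B.toReal * C) + 1, by positivity, ?_⟩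
  intro h g hh hg _ _ hSh hSg hWh hWg
  set A := angSin bf (k - (3 + γ) / 2) with hA
  have hA0 : 0 ≤ A := integral_nonneg fun σ =>
    mul_nonneg (hbf.2.1 _) (Real.rpow_nonneg (Real.sqrt_nonneg _) _)
  set q := k + γ / 2 - 1 / 2 with hq
  have hstar : ∀ f, 0 ≤ starNorm γ k f := fun f => Real.sqrt_nonneg _
  have hw : ∀ f, 0 ≤ wNorm q f := fun f => Real.sqrt_nonneg _
  -- `N` bounds each of the lower-order contributions.
  set N := B.toReal * C * (wNorm q h * wNorm q g) with hN
  have hN0 : 0 ≤ N := mul_nonneg (by positivity) (mul_nonneg (hw h) (hw g))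
  have hlow : B * ((pairJ γ Wt (fun v => h v ^ 2 * jap v ^ (2 * k - 1))) ^ (1 / 2 : ℝ) *
      (pairJ γ Wt (fun v => g v ^ 2 * jap v ^ (2 * k - 1))) ^ (1 / 2 : ℝ)) ≤ ENNReal.ofReal N := by
    calc _ ≤ B * ((ENNReal.ofReal C * ENNReal.ofReal (wSqR q h)) ^ (1 / 2 : ℝ) *
          (ENNReal.ofReal C * ENNReal.ofReal (wSqR q g)) ^ (1 / 2 : ℝ)) := by
          gcongr
          · exact pairJ_Wt_le hCker h hC.le hWh
          · exact pairJ_Wt_le hCker g hC.le hWg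
      _ = _ := by
          rw [rpow_half_mul, ofReal_rpow_half, ofReal_rpow_half, hN,
            ENNReal.ofReal_mul (by positivity), ENNReal.ofReal_mul ENNReal.toReal_nonneg,
            ENNReal.ofReal_toReal hBtop, ENNReal.ofReal_mul (hw h), wNorm, wNorm, mul_assoc B]
  have m0 := measurable_ker (γ := γ) hbf
  have m2 := measurable_vP
  have m3 := measurable_vsP
  have m4 := measurable_sinHalf
  have hgain : ∫⁻ p : E3 × E3 × S2, ENNReal.ofReal (ker γ bf p * |h (vsP p.1 p.2.1 p.2.2)| *
      maxw (vP p.1 p.2.1 p.2.2) * |g p.1| * jap p.1 ^ (2 * k)) ≤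
      ENNReal.ofReal (A * (starNorm γ k h * starNorm γ k g) + 2 * (C₁ * C₂) * N) := by
    calc _ ≤ ∫⁻ p : E3 × E3 × S2, (ENNReal.ofReal (ker γ bf p *
          (sinHalf p.1 p.2.1 p.2.2 * jap (vsP p.1 p.2.1 p.2.2)) ^ k * |h (vsP p.1 p.2.1 p.2.2)| *
          maxw (vP p.1 p.2.1 p.2.2) * |g p.1| * jap p.1 ^ k) +
          ENNReal.ofReal (C₁ * C₂) * ENNReal.ofReal (ker γ bf p * |h (vsP p.1 p.2.1 p.2.2)| *
          Wt (vP p.1 p.2.1 p.2.2) * |g p.1| *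
          ((sinHalf p.1 p.2.1 p.2.2 * jap (vsP p.1 p.2.1 p.2.2)) ^ (k - 1 / 2) *
            jap p.1 ^ (k - 1 / 2))) +
          ENNReal.ofReal (C₁ * C₂) * ENNReal.ofReal (ker γ bf p * |h (vsP p.1 p.2.1 p.2.2)| *
          Wt (vP p.1 p.2.1 p.2.2) * |g p.1|)) := by
          refine lintegral_mono fun p => ?_
          have h1 := ker_nonneg (γ := γ) hbf p
          have h2 := Wt_pos (vP p.1 p.2.1 p.2.2)
          have h2' := maxw_nonneg (vP p.1 p.2.1 p.2.2)
          have h3 := sinHalf_nonneg p.1 p.2.1 p.2.2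
          have h4 := jap_pos (vsP p.1 p.2.1 p.2.2)
          have h5 := jap_pos p.1
          rw [← ENNReal.ofReal_mul hc12.le, ← ENNReal.ofReal_mul hc12.le,
            ← ENNReal.ofReal_add (by positivity) (by positivity),
            ← ENNReal.ofReal_add (by positivity) (by positivity)]
          apply ENNReal.ofReal_le_ofReal
          exact gain_pointwise hC₁.le h1 (by positivity) (jap_ge_one p.1) (abs_nonneg _)
            h2' (abs_nonneg _)
            (hsplit _ _ _ (by positivity) (by linarith [norm_nonneg (vP p.1 p.2.1 p.2.2)])
              (jap_ge_one p.1) (jap_split p.1 p.2.1 p.2.2)) (hgauss _)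
      _ ≤ ENNReal.ofReal (A * (starNorm γ k h * starNorm γ k g)) +
          ENNReal.ofReal (C₁ * C₂) * ENNReal.ofReal N +
          ENNReal.ofReal (C₁ * C₂) * ENNReal.ofReal N := by
          rw [lintegral_add_left (by fun_prop), lintegral_add_left (by fun_prop),
            lintegral_const_mul' _ _ ENNReal.ofReal_ne_top,
            lintegral_const_mul' _ _ ENNReal.ofReal_ne_top]
          gcongr
          · refine (term_principal hγ1 hγ2 hk hbf hh hg).trans (le_of_eq ?_)
            rw [pairJ_maxw γ k h hSh, pairJ_maxw γ k g hSg, angN_eq hbf (by linarith),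
              ofReal_rpow_half, ofReal_rpow_half, ENNReal.ofReal_mul hA0,
              ENNReal.ofReal_mul (hstar h), starNorm, starNorm]
          · exact (term_cross hγ1 hγ2 hk hbf hL hbL hh hg).trans hlow
          · exact (term_gain hk hbf hL hbL hh hg).trans hlow
      _ = _ := by
          have := mul_nonneg hA0 (mul_nonneg (hstar h) (hstar g))
          rw [← ENNReal.ofReal_mul hc12.le, ← ENNReal.ofReal_add this (by positivity),
            ← ENNReal.ofReal_add (by positivity) (by positivity)]
          congr 1; ring
  have hloss : ∫⁻ p : E3 × E3 × S2, ENNReal.ofReal (ker γ bf p * |h p.2.1| *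
      maxw p.1 * |g p.1| * jap p.1 ^ (2 * k)) ≤ ENNReal.ofReal (C₂ * N) := by
    calc _ ≤ ∫⁻ p : E3 × E3 × S2, ENNReal.ofReal C₂ *
          ENNReal.ofReal (ker γ bf p * |h p.2.1| * Wt p.1 * |g p.1|) := by
          refine lintegral_mono fun p => ?_
          have h1 := ker_nonneg (γ := γ) hbf p
          have h2 := maxw_nonneg p.1
          have h5 := jap_pos p.1
          have h6 : maxw p.1 * jap p.1 ^ (2 * k) ≤ C₂ * Wt p.1 := by
            refine le_trans ?_ (hgauss p.1)
            have : jap p.1 ≤ 1 + 2 * ‖p.1‖ := by linarith [jap_le p.1, norm_nonneg p.1]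
            gcongr
          rw [← ENNReal.ofReal_mul hC₂.le]
          apply ENNReal.ofReal_le_ofReal
          calc _ = ker γ bf p * |h p.2.1| * |g p.1| * (maxw p.1 * jap p.1 ^ (2 * k)) := by ring
            _ ≤ ker γ bf p * |h p.2.1| * |g p.1| * (C₂ * Wt p.1) := by gcongr
            _ = _ := by ring
      _ ≤ _ := by
          rw [lintegral_const_mul' _ _ ENNReal.ofReal_ne_top, ENNReal.ofReal_mul hC₂.le]
          gcongr
          exact (term_loss hk hbf hbL hh hg).trans hlow
  have hP := mul_nonneg hA0 (mul_nonneg (hstar h) (hstar g))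
  have key := (ofReal_abs_integral_le (γ := γ) (k := k) hbf hh hg).trans (add_le_add hgain hloss)
  rw [← ENNReal.ofReal_add (by positivity) (by positivity),
    ENNReal.ofReal_le_ofReal_iff (by positivity)] at key
  have hwp := mul_nonneg (hw h) (hw g)
  calc _ ≤ _ := key
    _ = A * starNorm γ k h * starNorm γ k g +
        (2 * (C₁ * C₂) + C₂) * (B.toReal * C) * (wNorm q h * wNorm q g) := by rw [hN]; ring
    _ ≤ _ := by linarith

end
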